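/- For every integer k ≥ 2 there exist constants C₁, C₂ > 0 (depending only on k) with the following property: for every g ∈ ℤ[x] of degree k, all positive integers a, q with gcd(a,q) = 1, and every Y > 0, one has | ∑_{0 ≤ s ≤ q−1, s ∈ W_q(g;Y)} e(a·g(s)/q) | ≤ C₁·gcd(cont(g), q)³·C₂^{ω(q)}·q^{1−1/k}; moreover if q ≤ Y then the stronger bound | ∑_{0 ≤ s ≤ q−1, s ∈ W_q(g;Y)} e(a·g(s)/q) | ≤ C₁·gcd(cont(g), q)³·C₂^{ω(q)}·q^{1/2} holds. Here ω(q) denotes the number of distinct prime factors of q. -/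

import Mathlib

/-- `γ(g;p)`: the smallest positive integer `γ` such that the derivative `g'` does not vanish
identically modulo `p^γ`. -/
noncomputable def gammaExp (g : Polynomial ℤ) (p : ℕ) : ℕ :=
  sInf {c : ℕ | 0 < c ∧ ¬ ∀ n : ℤ, ((p : ℤ) ^ c) ∣ (Polynomial.derivative g).eval n}

/-- `j(g;p)`: the number of residues `s` modulo `p^{γ(g;p)}` with `g'(s) ≡ 0 (mod p^{γ(g;p)})`. -/
noncomputable def jCount (g : Polynomial ℤ) (p : ℕ) : ℕ := by
  classical
  exact ((Finset.range (p ^ gammaExp g p)).filter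
    (fun s => ((p : ℤ) ^ gammaExp g p) ∣ (Polynomial.derivative g).eval (s : ℤ))).card

/-- `∏_{p ≤ Y} (1 - j(g;p)/p^{γ(g;p)})`, the product being over primes `p ≤ Y`. -/
noncomputable def wProd (g : Polynomial ℤ) (Y : ℝ) : ℝ := by
  classical
  exact ∏ p ∈ (Finset.range (⌊Y⌋₊ + 1)).filter Nat.Prime,
    (1 - (jCount g p : ℝ) / (p : ℝ) ^ gammaExp g p)

/-- `W(g;Y) = {n ∈ ℤ : g'(n) ≢ 0 (mod p^{γ(g;p)}) for all primes p ≤ Y}`. -/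
def WSet (g : Polynomial ℤ) (Y : ℝ) : Set ℤ :=
  {n : ℤ | ∀ p : ℕ, p.Prime → (p : ℝ) ≤ Y →
    ¬ ((p : ℤ) ^ gammaExp g p ∣ (Polynomial.derivative g).eval n)}

/-- `W_q(g;Y) = {n ∈ ℤ : g'(n) ≢ 0 (mod p^{γ(g;p)}) for all primes p ≤ Y with p^{γ(g;p)} ∣ q}`. -/
def WqSet (g : Polynomial ℤ) (Y : ℝ) (q : ℕ) : Set ℤ :=
  {n : ℤ | ∀ p : ℕ, p.Prime → (p : ℝ) ≤ Y → p ^ gammaExp g p ∣ q →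
    ¬ ((p : ℤ) ^ gammaExp g p ∣ (Polynomial.derivative g).eval n)}
/-- `cont(g)`: the gcd of the nonconstant coefficients of `g`. -/
noncomputable def cont (g : Polynomial ℤ) : ℕ :=
  (Finset.Icc 1 g.natDegree).gcd (fun i => (g.coeff i).natAbs)
/-- `e(x) = e^{2πix}`. -/
noncomputable def e (x : ℝ) : ℂ := Complex.exp (2 * Real.pi * Complex.I * x)

/-!
By the Chinese remainder theorem the sieved sum is multiplicative in the modulus, so it suffices to
bound it modulo a prime power `p ^ j`, with a constant depending only on `k`.

If `p ≤ Y`, the residues `s` with `p ^ γ ∣ g'(s)` are removed, `γ = γ(g;p)`. For `j ≥ 2γ` the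
remaining sum vanishes, since varying `s` within a residue class modulo `p ^ (j - γ)` yields a
nontrivial full geometric sum. For smaller `j` one uses the trivial bound: `p ^ (γ - 1)` divides all
values of `g'`, hence divides `cont g` up to a factor depending on `k` (by inverting a Vandermonde
matrix), and this pays for `p ^ j` through the cube of the gcd. The only remaining case is
`γ = j = 1`, which is Weil's bound up to the boundedly many removed residues.

If `p > Y` nothing is removed and the estimate is Hua's bound: only the residue classes of the
critical points modulo `p` contribute, each gives a sum of the same kind modulo a smaller power of
`p`, and the loss is controlled by the multiplicities of the critical points.

Weil's bound is proved by Stepanov's method. Over the extensions of even degree of the field with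
`q` elements, an auxiliary polynomial of small degree bounds the number of `x` for which `f(x)` has
a given trace, and hence the exponential sums. The `L`-function attached to these sums is a
polynomial of degree at most `deg f - 1`, and the estimates over all such extensions force its
inverse roots to have absolute value at most `√q`.
-/

open Polynomial

section Stepanov

theorem linearIndependent_of_natDegree_injective {R ι : Type*} [Ring R] [IsDomain R]
    {b : ι → R[X]} (hb : ∀ i, b i ≠ 0) (hinj : Function.Injective fun i => (b i).natDegree) :
    LinearIndependent R b := by
  classical
  rw [linearIndependent_iff']
  intro s v hsum i hi
  by_contra hvi
  have hdeg : (∑ j ∈ s, v j • b j).degree = s.sup fun j => (v j • b j).degree := by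
    refine degree_sum_eq_of_disjoint _ s ?_
    rintro j ⟨-, hj⟩ l ⟨-, hl⟩ hjl hdeg
    rw [smul_ne_zero_iff] at hj hl
    refine hjl (hinj ?_)
    simpa only [natDegree_smul _ hj.1, natDegree_smul _ hl.1] using natDegree_eq_of_degree_eq hdeg
  have hle := Finset.le_sup (f := fun j => (v j • b j).degree) hi
  rw [← hdeg, hsum, degree_zero, le_bot_iff, degree_eq_bot] at hle
  exact smul_ne_zero hvi (hb i) hle

variable {F : Type*} [Field F]

theorem exists_sum_smul_eq_zero_of_degree_lt {ι : Type*} [Fintype ι] {b : ι → F[X]} {B : ℕ}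
    (hb : ∀ i, (b i).degree < B) (hB : B < Fintype.card ι) :
    ∃ v : ι → F, v ≠ 0 ∧ ∑ i, v i • b i = 0 := by
  let b' : ι → degreeLT F B := fun i => ⟨b i, mem_degreeLT.2 (hb i)⟩
  have hdep : ¬ LinearIndependent F b' := fun hli => by
    have := Module.Finite.equiv (degreeLTEquiv F B).symm
    have hcard := hli.fintype_card_le_finrank
    rw [(degreeLTEquiv F B).finrank_eq, Module.finrank_fin_fun] at hcard
    exact hB.not_ge hcard
  obtain ⟨v, hsum, i, hi⟩ := Fintype.not_linearIndependent_iff.1 hdep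
  refine ⟨v, fun hv => hi (congrFun hv i), ?_⟩
  simpa [b'] using congrArg Subtype.val hsum

/-- The building blocks `x ^ (l + r i) h ^ j` of Stepanov's auxiliary polynomial. -/
noncomputable def stepanovTerm {I m ρ : ℕ} (r : ℕ) (h : F[X]) (t : Fin I × Fin m × Fin ρ) : F[X] :=
  X ^ (t.2.2 + r * t.1 : ℕ) * h ^ (t.2.1 : ℕ)

/-- The `r`-th power of `stepanovTerm r h t`, of much lower degree after the reductions
`x ^ r ^ 2 = x` and `h ^ r = c - h`, which hold at the points to be counted. -/
noncomputable def stepanovReducedPow {I m ρ : ℕ} (r : ℕ) (h : F[X]) (c : F)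
    (t : Fin I × Fin m × Fin ρ) : F[X] :=
  X ^ (r * t.2.2 + t.1 : ℕ) * (C c - h) ^ (t.2.1 : ℕ)

variable {h : F[X]} {I m ρ d : ℕ}

theorem natDegree_stepanovTerm (hh : h ≠ 0) (hdeg : h.natDegree = d * ρ)
    (t : Fin I × Fin m × Fin ρ) :
    (stepanovTerm (m * ρ) h t).natDegree = t.2.2 + ρ * (m * t.1 + d * t.2.1) := by
  rw [stepanovTerm, natDegree_mul (pow_ne_zero _ X_ne_zero) (pow_ne_zero _ hh), natDegree_X_pow,
    natDegree_pow, hdeg]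
  ring

theorem natDegree_stepanovTerm_le (hh : h ≠ 0) (hdeg : h.natDegree = d * ρ) (hm : 0 < m)
    (t : Fin (ρ + d) × Fin m × Fin ρ) :
    (stepanovTerm (m * ρ) h t).natDegree ≤ ρ * (m * ρ) + 2 * d * (m * ρ) := by
  obtain ⟨i, j, l⟩ := t
  rw [natDegree_stepanovTerm hh hdeg]
  have hi : (i : ℕ) + 1 ≤ ρ + d := i.2
  have hρ : ρ ≤ ρ * m := Nat.le_mul_of_pos_right _ hm
  calc (l : ℕ) + ρ * (m * i + d * j) ≤ ρ * m + ρ * (m * i + d * m) := by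
        gcongr
        · exact l.2.le.trans hρ
        · exact j.2.le
    _ = ρ * m * (i + 1) + d * (m * ρ) := by ring
    _ ≤ ρ * m * (ρ + d) + d * (m * ρ) := by gcongr
    _ = ρ * (m * ρ) + 2 * d * (m * ρ) := by ring

theorem linearIndependent_stepanovTerm (hh : h ≠ 0) (hdeg : h.natDegree = d * ρ)
    (hdm : m.Coprime d) :
    LinearIndependent F (stepanovTerm (m * ρ) h : Fin I × Fin m × Fin ρ → F[X]) := by
  refine linearIndependent_of_natDegree_injective
    (fun t => mul_ne_zero (pow_ne_zero _ X_ne_zero) (pow_ne_zero _ hh)) ?_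
  rintro ⟨i, j, l⟩ ⟨i', j', l'⟩ heq
  simp only [natDegree_stepanovTerm hh hdeg] at heq
  have hl : (l : ℕ) = l' := by
    simpa [Nat.add_mul_mod_self_left, Nat.mod_eq_of_lt l.2, Nat.mod_eq_of_lt l'.2]
      using congrArg (· % ρ) heq
  have hij : m * (i : ℕ) + d * j = m * i' + d * j' :=
    Nat.eq_of_mul_eq_mul_left l.pos (by omega)
  have hj : (j : ℕ) = j' := by
    have hmod : d * (j : ℕ) ≡ d * j' [MOD m] := by
      simpa [Nat.ModEq, Nat.mul_add_mod] using congrArg (· % m) hij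
    exact (Nat.ModEq.cancel_left_of_coprime hdm hmod).eq_of_lt_of_lt j.2 j'.2
  have hi : (i : ℕ) = i' := by
    rw [hj] at hij
    exact Nat.eq_of_mul_eq_mul_left j.pos (by omega)
  ext <;> simp [hi, hj, hl]

theorem degree_stepanovReducedPow_lt (hdeg : h.natDegree = d * ρ) (c : F)
    (t : Fin I × Fin m × Fin ρ) :
    (stepanovReducedPow (m * ρ) h c t).degree <
      (m * ρ * (ρ - 1) + I + (m - 1) * (d * ρ) : ℕ) := by
  obtain ⟨i, j, l⟩ := t
  have hsub : (C c - h).natDegree ≤ d * ρ :=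
    (natDegree_sub_le _ _).trans (by simp [hdeg])
  have hnat : (stepanovReducedPow (m * ρ) h c (i, j, l)).natDegree ≤
      m * ρ * (ρ - 1) + i + (m - 1) * (d * ρ) :=
    natDegree_mul_le_of_le ((natDegree_X_pow_le _).trans (by gcongr; omega))
      (natDegree_pow_le_of_le _ hsub |>.trans (by gcongr; omega))
  refine degree_le_natDegree.trans_lt (Nat.cast_lt.2 (hnat.trans_lt ?_))
  have := i.2
  gcongr

theorem aeval_stepanovTerm_pow {K : Type*} [Field K] [Algebra F K] {r : ℕ} {c : F} {x : K}
    (hx : x ^ r ^ 2 = x)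
    (hc : aeval x h + aeval x h ^ r = algebraMap F K c) (t : Fin I × Fin m × Fin ρ) :
    aeval x (stepanovTerm r h t) ^ r = aeval x (stepanovReducedPow r h c t) := by
  have hh : aeval x h ^ r = algebraMap F K c - aeval x h := by rw [← hc]; ring
  have hxpow : (x ^ (t.2.2 + r * t.1 : ℕ)) ^ r = x ^ (r * t.2.2 + t.1 : ℕ) := by
    rw [← pow_mul, add_mul, pow_add, pow_add, mul_comm r t.2.2,
      show r * (t.1 : ℕ) * r = r ^ 2 * t.1 by ring, pow_mul x (r ^ 2), hx]
  simp only [stepanovTerm, stepanovReducedPow, map_mul, map_pow, map_sub, aeval_X, aeval_C, mul_pow,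
    hxpow]
  rw [pow_right_comm, hh]

theorem exists_stepanovReducedPow_relation (hdeg : h.natDegree = d * ρ) (hρ : 0 < ρ) (hm : 1 < m)
    (hd : 0 < d) (c : F) :
    ∃ v : Fin (ρ + d) × Fin m × Fin ρ → F, v ≠ 0 ∧
      ∑ t, v t • stepanovReducedPow (m * ρ) h c t = 0 := by
  refine exists_sum_smul_eq_zero_of_degree_lt (degree_stepanovReducedPow_lt hdeg c) ?_
  obtain ⟨m, rfl⟩ := Nat.exists_eq_add_of_lt hm
  obtain ⟨ρ, rfl⟩ := Nat.exists_eq_add_of_lt hρ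
  obtain ⟨d, rfl⟩ := Nat.exists_eq_add_of_lt hd
  simp only [Fintype.card_prod, Fintype.card_fin, zero_add, Nat.add_sub_cancel]
  nlinarith [Nat.zero_le (ρ * m), Nat.zero_le (d * ρ)]

variable [Fintype F] {K : Type*} [Field K] [Algebra F K]

theorem aeval_pow_card_pow (P : F[X]) (x : K) (n : ℕ) :
    aeval x P ^ Fintype.card F ^ n = aeval (x ^ Fintype.card F ^ n) P := by
  have hfrob (y : K) : (FiniteField.frobeniusAlgHom F K ^ n) y = y ^ Fintype.card F ^ n := by
    rw [AlgHom.coe_pow, FiniteField.coe_frobeniusAlgHom, pow_iterate]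
  rw [← hfrob, ← hfrob, aeval_algHom_apply]

theorem exists_stepanov_polynomial {μ : ℕ} (hd : 0 < d) (hdq : (Fintype.card F).Coprime d)
    (hdeg : h.natDegree = d * Fintype.card F ^ μ) (c : F) :
    ∃ G : F[X], G ≠ 0 ∧
      G.natDegree ≤ Fintype.card F ^ μ * Fintype.card F ^ (μ + 1) +
        2 * d * Fintype.card F ^ (μ + 1) ∧
      ∀ x : K, x ^ (Fintype.card F ^ (μ + 1)) ^ 2 = x →
        aeval x h + aeval x h ^ Fintype.card F ^ (μ + 1) = algebraMap F K c → aeval x G = 0 := by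
  set q := Fintype.card F
  have hq : 1 < q := Fintype.one_lt_card
  have hρ : 0 < q ^ μ := by positivity
  have hh : h ≠ 0 := ne_zero_of_natDegree_gt (n := 0) (hdeg ▸ Nat.mul_pos hd hρ)
  rw [pow_succ' q μ]
  obtain ⟨v, hv, hrel⟩ := exists_stepanovReducedPow_relation hdeg hρ hq hd c
  refine ⟨∑ t, v t • stepanovTerm (q * q ^ μ) h t, fun h0 => hv (funext ?_), ?_, ?_⟩
  · exact Fintype.linearIndependent_iff.1 (linearIndependent_stepanovTerm hh hdeg hdq) v h0
  · exact natDegree_sum_le_of_forall_le _ _ fun t _ =>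
      (natDegree_smul_le _ _).trans (natDegree_stepanovTerm_le hh hdeg hq.pos t)
  · intro x hxr hxc
    refine eq_zero_of_pow_eq_zero (n := q * q ^ μ) ?_
    have hpow (P : F[X]) : aeval x P ^ (q * q ^ μ) = aeval (x ^ (q * q ^ μ)) P := by
      rw [← pow_succ']
      exact aeval_pow_card_pow P x (μ + 1)
    calc aeval x (∑ t, v t • stepanovTerm (q * q ^ μ) h t) ^ (q * q ^ μ)
        = ∑ t, v t • aeval x (stepanovTerm (q * q ^ μ) h t) ^ (q * q ^ μ) := by
          rw [hpow]
          simp only [map_sum, map_smul, hpow]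
      _ = aeval x (∑ t, v t • stepanovReducedPow (q * q ^ μ) h c t) := by
          simp only [aeval_stepanovTerm_pow hxr hxc, map_sum, map_smul]
      _ = 0 := by rw [hrel, map_zero]

theorem natDegree_sum_pow_card_pow {f : F[X]} (hf : 0 < f.natDegree) (μ : ℕ) :
    (∑ i ∈ Finset.range (μ + 1), f ^ Fintype.card F ^ i).natDegree =
      f.natDegree * Fintype.card F ^ μ := by
  have hlt : (∑ i ∈ Finset.range μ, f ^ Fintype.card F ^ i).natDegree <
      (f ^ Fintype.card F ^ μ).natDegree := by
    rw [natDegree_pow]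
    have hq : 1 < Fintype.card F := Fintype.one_lt_card
    refine (natDegree_sum_le _ _).trans_lt ((Finset.fold_max_lt _).2 ⟨by positivity, ?_⟩)
    intro i hi
    have := Finset.mem_range.1 hi
    rw [Function.comp, natDegree_pow]
    gcongr
  rw [Finset.sum_range_succ, natDegree_add_eq_right_of_natDegree_lt hlt, natDegree_pow, mul_comm]

theorem algebraMap_trace_aeval_eq_add_pow [Finite K] {μ : ℕ}
    (hK : Module.finrank F K = 2 * (μ + 1)) (f : F[X]) (x : K) :
    algebraMap F K (Algebra.trace F K (aeval x f)) =
      aeval x (∑ i ∈ Finset.range (μ + 1), f ^ Fintype.card F ^ i) +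
        aeval x (∑ i ∈ Finset.range (μ + 1), f ^ Fintype.card F ^ i) ^
          Fintype.card F ^ (μ + 1) := by
  rw [FiniteField.algebraMap_trace_eq_sum_pow, hK, two_mul, Finset.sum_range_add,
    Nat.card_eq_fintype_card, aeval_pow_card_pow]
  simp only [map_sum, map_pow, ← aeval_pow_card_pow f, ← pow_mul, ← pow_add]

theorem card_trace_aeval_eq_le [Fintype K] [DecidableEq F] {f : F[X]} (hd : 0 < f.natDegree)
    (hdq : (Fintype.card F).Coprime f.natDegree) {μ : ℕ}
    (hK : Module.finrank F K = 2 * (μ + 1)) (c : F) :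
    (Finset.univ.filter fun x : K => Algebra.trace F K (aeval x f) = c).card ≤
      Fintype.card F ^ μ * Fintype.card F ^ (μ + 1) +
        2 * f.natDegree * Fintype.card F ^ (μ + 1) := by
  obtain ⟨G, hG0, hGdeg, hroot⟩ :=
    exists_stepanov_polynomial (K := K) hd hdq (natDegree_sum_pow_card_pow hd μ) c
  refine le_trans ?_ (natDegree_map_le (f := algebraMap F K) |>.trans hGdeg)
  refine card_le_degree_of_subset_roots fun x hx => ?_
  rw [mem_roots (Polynomial.map_ne_zero hG0), IsRoot, eval_map_algebraMap]
  refine hroot x ?_ ?_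
  · rw [← pow_mul, mul_comm, ← hK, ← Module.card_eq_pow_finrank, FiniteField.pow_card]
  · rw [← algebraMap_trace_aeval_eq_add_pow hK, (Finset.mem_filter.1 hx).2]

theorem norm_sum_addChar_le_of_card_fiber_le {X A : Type*} [Fintype X] [AddCommGroup A] [Fintype A]
    [DecidableEq A] {ψ : AddChar A ℂ} (hψ : ψ ≠ 1) (φ : X → A) {M E : ℝ} (hE : 0 ≤ E)
    (hcard : (Fintype.card X : ℝ) = Fintype.card A * M)
    (hfiber : ∀ c, ((Finset.univ.filter fun x => φ x = c).card : ℝ) ≤ M + E) :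
    ‖∑ x, ψ (φ x)‖ ≤ 2 * Fintype.card A * E := by
  set Z : A → ℝ := fun c => (Finset.univ.filter fun x => φ x = c).card
  have hZ : ∑ c, Z c = Fintype.card A * M := by
    rw [← hcard, ← Finset.card_univ,
      Finset.card_eq_sum_card_fiberwise (f := φ) (t := Finset.univ) (by simp)]
    simp [Z]
  have hsum : ∑ x, ψ (φ x) = ∑ c, ψ c * ((Z c - M : ℝ) : ℂ) := by
    have hzero : ∑ c, ψ c = 0 := AddChar.sum_eq_zero_of_ne_one hψ
    rw [← Finset.sum_fiberwise' Finset.univ φ]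
    simp only [Complex.ofReal_sub, mul_sub, Finset.sum_sub_distrib, ← Finset.sum_mul, hzero]
    simp [Z, mul_comm]
  have hterm (c : A) : ‖ψ c * ((Z c - M : ℝ) : ℂ)‖ ≤ 2 * E - (Z c - M) := by
    rw [norm_mul, AddChar.norm_apply, one_mul, Complex.norm_real, Real.norm_eq_abs, abs_le]
    constructor <;> linarith [hfiber c]
  calc ‖∑ x, ψ (φ x)‖ ≤ ∑ c, (2 * E - (Z c - M)) := by
        rw [hsum]; exact norm_sum_le_of_le _ fun c _ => hterm c
    _ = 2 * Fintype.card A * E := by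
        simp only [Finset.sum_sub_distrib, hZ, Finset.sum_const, Finset.card_univ, nsmul_eq_mul]
        ring

theorem norm_sum_addChar_trace_le [Fintype K] {f : F[X]} (hd : 0 < f.natDegree)
    (hdq : (Fintype.card F).Coprime f.natDegree) {ψ : AddChar F ℂ} (hψ : ψ ≠ 1) {μ : ℕ}
    (hK : Module.finrank F K = 2 * (μ + 1)) :
    ‖∑ x : K, ψ (Algebra.trace F K (aeval x f))‖ ≤
      2 * Fintype.card F * (2 * f.natDegree * Fintype.card F ^ (μ + 1)) := by
  classical
  refine norm_sum_addChar_le_of_card_fiber_le hψ _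
    (M := Fintype.card F ^ μ * Fintype.card F ^ (μ + 1)) (by positivity) ?_
    fun c => mod_cast card_trace_aeval_eq_le hd hdq hK c
  rw [Module.card_eq_pow_finrank (K := F) (V := K), hK]
  push_cast
  ring

end Stepanov

section RootSums

variable {F : Type*} [Field F]

/-- The generating function `∑_{j ≥ 1} p_j X ^ j` of the power sums `p_j` of the roots of `h`, as
the logarithmic derivative `-X R' / R` of the reversed polynomial `R`; this stays over `F`. -/
noncomputable def newtonSeries (h : F[X]) : PowerSeries F :=
  -(PowerSeries.X * PowerSeries.derivative F (h.reverse : PowerSeries F)) *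
    (h.reverse : PowerSeries F)⁻¹

/-- The sum of the `j`-th powers of the roots of `h`, with the convention that it vanishes for
`j = 0`. -/
noncomputable def rootPowerSum (h : F[X]) (j : ℕ) : F :=
  PowerSeries.coeff j (newtonSeries h)

theorem constantCoeff_coe_reverse (h : F[X]) :
    PowerSeries.constantCoeff (h.reverse : PowerSeries F) = h.leadingCoeff := by
  rw [← PowerSeries.coeff_zero_eq_constantCoeff_apply, Polynomial.coeff_coe, coeff_zero_reverse]

theorem eq_newtonSeries_iff {h : F[X]} (h0 : h ≠ 0) (s : PowerSeries F) :
    s = newtonSeries h ↔ s * (h.reverse : PowerSeries F) =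
      -(PowerSeries.X * PowerSeries.derivative F (h.reverse : PowerSeries F)) := by
  refine PowerSeries.eq_mul_inv_iff_mul_eq ?_
  rwa [constantCoeff_coe_reverse, leadingCoeff_ne_zero]

theorem newtonSeries_mul_reverse {h : F[X]} (h0 : h ≠ 0) :
    newtonSeries h * (h.reverse : PowerSeries F) =
      -(PowerSeries.X * PowerSeries.derivative F (h.reverse : PowerSeries F)) :=
  (eq_newtonSeries_iff h0 _).1 rfl

theorem newtonSeries_mul {g h : F[X]} (g0 : g ≠ 0) (h0 : h ≠ 0) :
    newtonSeries (g * h) = newtonSeries g + newtonSeries h := by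
  symm
  rw [eq_newtonSeries_iff (mul_ne_zero g0 h0), reverse_mul_of_domain, Polynomial.coe_mul,
    Derivation.leibniz, smul_eq_mul, smul_eq_mul]
  linear_combination (h.reverse : PowerSeries F) * newtonSeries_mul_reverse g0 +
    (g.reverse : PowerSeries F) * newtonSeries_mul_reverse h0

theorem newtonSeries_map {E : Type*} [Field E] (φ : F →+* E) {h : F[X]} (h0 : h ≠ 0) :
    newtonSeries (h.map φ) = PowerSeries.map φ (newtonSeries h) := by
  symm
  have hderiv (s : PowerSeries F) : PowerSeries.derivative E (PowerSeries.map φ s) =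
      PowerSeries.map φ (PowerSeries.derivative F s) := by
    ext n; simp [PowerSeries.coeff_derivative]
  have hrev : ((h.map φ).reverse : PowerSeries E) =
      PowerSeries.map φ (h.reverse : PowerSeries F) := by
    ext n; simp [coeff_reverse]
  rw [eq_newtonSeries_iff (Polynomial.map_ne_zero h0), hrev, hderiv, ← map_mul,
    newtonSeries_mul_reverse h0]
  simp

theorem constantCoeff_newtonSeries (h : F[X]) :
    PowerSeries.constantCoeff (newtonSeries h) = 0 := by
  simp [newtonSeries]

theorem rootPowerSum_X_sub_C (α : F) (n : ℕ) :
    rootPowerSum (X - C α) (n + 1) = α ^ (n + 1) := by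
  have hrev : ((X - C α : F[X]).reverse : PowerSeries F) =
      1 - PowerSeries.C α * PowerSeries.X := by
    have : (X - C α : F[X]).reverse = 1 - C α * X := by
      rw [reverse, natDegree_X_sub_C, reflect_sub, reflect_C, pow_one]
      simp
    simp [this]
  have hspec := newtonSeries_mul_reverse (X_sub_C_ne_zero α)
  have hrec (m : ℕ) : rootPowerSum (X - C α) (m + 1) =
      α * rootPowerSum (X - C α) m + if m = 0 then α else 0 := by
    have := congrArg (PowerSeries.coeff (m + 1)) hspec
    rw [hrev, mul_sub, mul_one, mul_left_comm, map_sub, PowerSeries.coeff_C_mul,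
      PowerSeries.coeff_succ_mul_X, map_neg, PowerSeries.coeff_succ_X_mul] at this
    rw [rootPowerSum, rootPowerSum, ← sub_eq_iff_eq_add', this]
    simp [PowerSeries.coeff_C]
  induction n with
  | zero =>
    rw [hrec, if_pos rfl, rootPowerSum, PowerSeries.coeff_zero_eq_constantCoeff_apply,
      constantCoeff_newtonSeries]
    ring
  | succ n ih => rw [hrec, ih, if_neg n.succ_ne_zero, add_zero, pow_succ' α (n + 1)]

variable {h : F[X]} {d : ℕ}

theorem natDegree_add_C_mul_X_pow (hd : 0 < d) (hdn : d ≤ h.natDegree) (c : F) :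
    (h + C c * X ^ (h.natDegree - d)).natDegree = h.natDegree :=
  natDegree_add_eq_left_of_natDegree_lt ((natDegree_C_mul_X_pow_le _ _).trans_lt (by omega))

theorem reverse_add_C_mul_X_pow (hd : 0 < d) (hdn : d ≤ h.natDegree) (c : F) :
    (h + C c * X ^ (h.natDegree - d)).reverse = h.reverse + C c * X ^ d := by
  rw [reverse, natDegree_add_C_mul_X_pow hd hdn, reflect_add, reflect_C_mul_X_pow,
    revAt_le (Nat.sub_le _ _), Nat.sub_sub_self hdn, reverse]

theorem X_mul_derivative_C_mul_X_pow (c : F) (d : ℕ) :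
    PowerSeries.X * PowerSeries.derivative F (PowerSeries.C c * PowerSeries.X ^ d) =
      PowerSeries.C (d * c) * PowerSeries.X ^ d := by
  rcases d with _ | d
  · simp
  · simp [Derivation.leibniz_pow]
    ring

theorem newtonSeries_add_C_mul_X_pow (hm : h.Monic) (hd : 0 < d) (hdn : d ≤ h.natDegree) (c : F) :
    ∃ W : PowerSeries F, PowerSeries.constantCoeff W = -(d * c) ∧
      newtonSeries (h + C c * X ^ (h.natDegree - d)) =
        newtonSeries h + PowerSeries.X ^ d * W := by
  set k := h + C c * X ^ (h.natDegree - d)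
  have hk : k ≠ 0 := ne_zero_of_natDegree_gt (n := 0) <| by
    rw [natDegree_add_C_mul_X_pow hd hdn]; omega
  have hspec := newtonSeries_mul_reverse hk
  rw [reverse_add_C_mul_X_pow hd hdn, Polynomial.coe_add, Polynomial.coe_mul, Polynomial.coe_C,
    Polynomial.coe_pow, Polynomial.coe_X, map_add, mul_add PowerSeries.X,
    X_mul_derivative_C_mul_X_pow] at hspec
  have hU : PowerSeries.constantCoeff (h.reverse : PowerSeries F) = 1 := by
    rw [constantCoeff_coe_reverse, hm.leadingCoeff]
  refine ⟨(-PowerSeries.C (d * c) - PowerSeries.C c * newtonSeries k) *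
    (h.reverse : PowerSeries F)⁻¹, ?_, ?_⟩
  · simp [hU, constantCoeff_newtonSeries]
  · rw [← sub_eq_iff_eq_add', ← mul_assoc,
      PowerSeries.eq_mul_inv_iff_mul_eq (hU ▸ one_ne_zero)]
    linear_combination hspec - newtonSeries_mul_reverse hm.ne_zero

/-- The sum of `f` over the roots of `h`, for `f` without constant term. -/
noncomputable def rootSum (f h : F[X]) : F :=
  ∑ j ∈ Finset.range (f.natDegree + 1), f.coeff j * rootPowerSum h j

variable (f : F[X])

theorem rootSum_mul {g h : F[X]} (g0 : g ≠ 0) (h0 : h ≠ 0) :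
    rootSum f (g * h) = rootSum f g + rootSum f h := by
  simp only [rootSum, rootPowerSum, newtonSeries_mul g0 h0, map_add, mul_add,
    Finset.sum_add_distrib]

theorem rootSum_one : rootSum f 1 = 0 := by
  simpa using rootSum_mul f (one_ne_zero (α := F[X])) one_ne_zero

theorem rootSum_pow (h0 : h ≠ 0) (r : ℕ) : rootSum f (h ^ r) = r • rootSum f h := by
  induction r with
  | zero => simp [rootSum_one]
  | succ r ih => rw [pow_succ, rootSum_mul f (pow_ne_zero _ h0) h0, ih, succ_nsmul]

theorem rootSum_map {E : Type*} [Field E] (φ : F →+* E) (h0 : h ≠ 0) :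
    rootSum (f.map φ) (h.map φ) = φ (rootSum f h) := by
  simp [rootSum, rootPowerSum, newtonSeries_map φ h0]

variable {f}

theorem rootSum_X_sub_C (hf : f.coeff 0 = 0) (α : F) : rootSum f (X - C α) = f.eval α := by
  rw [rootSum, eval_eq_sum_range, Finset.sum_range_succ', Finset.sum_range_succ', hf]
  simp [rootPowerSum_X_sub_C]

theorem rootSum_prod_X_sub_C (hf : f.coeff 0 = 0) (s : Multiset F) :
    rootSum f (s.map fun α => X - C α).prod = (s.map fun α => f.eval α).sum := by
  induction s using Multiset.induction_on with
  | empty => simp [rootSum_one]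
  | cons a s ih =>
    rw [Multiset.map_cons, Multiset.prod_cons, rootSum_mul f (X_sub_C_ne_zero a), ih,
      rootSum_X_sub_C hf, Multiset.map_cons, Multiset.sum_cons]
    exact (monic_multiset_prod_of_monic _ _ fun α _ => monic_X_sub_C α).ne_zero

theorem rootSum_add_C_mul_X_pow (hm : h.Monic) (hd : 0 < f.natDegree)
    (hdn : f.natDegree ≤ h.natDegree) (c : F) :
    rootSum f (h + C c * X ^ (h.natDegree - f.natDegree)) =
      rootSum f h - f.leadingCoeff * (f.natDegree * c) := by
  obtain ⟨W, hW, hseries⟩ := newtonSeries_add_C_mul_X_pow hm hd hdn c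
  have hlow : ∑ j ∈ Finset.range f.natDegree,
      f.coeff j * PowerSeries.coeff j (PowerSeries.X ^ f.natDegree * W) = 0 :=
    Finset.sum_eq_zero fun j hj => by
      rw [PowerSeries.coeff_X_pow_mul', if_neg (Finset.mem_range.1 hj).not_ge, mul_zero]
  have htop : PowerSeries.coeff f.natDegree (PowerSeries.X ^ f.natDegree * W) =
      -(f.natDegree * c) := by
    rw [PowerSeries.coeff_X_pow_mul', if_pos le_rfl, Nat.sub_self,
      PowerSeries.coeff_zero_eq_constantCoeff_apply, hW]
  simp only [rootSum, rootPowerSum, hseries, map_add, mul_add, Finset.sum_add_distrib]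
  rw [Finset.sum_range_succ (fun j => f.coeff j * PowerSeries.coeff j (_ * W)), hlow, htop,
    leadingCoeff]
  ring

end RootSums

section FactorDegrees

open UniqueFactorizationMonoid

variable {F : Type*} [Field F] {h : F[X]}

open scoped Classical in
theorem monic_of_mem_normalizedFactors {P : F[X]} (hP : P ∈ normalizedFactors h) : P.Monic := by
  rw [← normalize_normalized_factor P hP]
  exact monic_normalize (irreducible_of_normalized_factor P hP).ne_zero

open scoped Classical in
theorem sum_count_normalizedFactors_mul_natDegree (hm : h.Monic) :
    ∑ P ∈ (normalizedFactors h).toFinset, (normalizedFactors h).count P * P.natDegree =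
      h.natDegree := by
  conv_rhs => rw [← hm.normalize_eq_self, ← prod_normalizedFactors_eq hm.ne_zero,
    natDegree_multiset_prod_of_monic _ fun _ => monic_of_mem_normalizedFactors,
    Finset.sum_multiset_map_count]
  simp only [smul_eq_mul]

open scoped Classical in
theorem pow_dvd_iff_le_count_normalizedFactors (h0 : h ≠ 0) {P : F[X]} (hP : P.Monic)
    (hirr : Irreducible P) (r : ℕ) : P ^ r ∣ h ↔ r ≤ (normalizedFactors h).count P := by
  rw [pow_dvd_iff_le_emultiplicity, emultiplicity_eq_count_normalizedFactors hirr h0,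
    hP.normalize_eq_self, Nat.cast_le]

end FactorDegrees

section RootSumChar

variable {F : Type*} [Field F] (ψ : AddChar F ℂ) (f : F[X]) {h : F[X]}

/-- The completely multiplicative function `h ↦ ψ (∑_{h(θ) = 0} f θ)` on nonzero polynomials: the
character whose `L`-function governs the sums of `ψ ∘ Tr ∘ f` over the extensions of `F`. -/
noncomputable def rootSumChar (h : F[X]) : ℂ := ψ (rootSum f h)

theorem rootSumChar_mul {g : F[X]} (g0 : g ≠ 0) (h0 : h ≠ 0) :
    rootSumChar ψ f (g * h) = rootSumChar ψ f g * rootSumChar ψ f h := by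
  simp only [rootSumChar, rootSum_mul f g0 h0, AddChar.map_add_eq_mul]

theorem rootSumChar_pow (h0 : h ≠ 0) (r : ℕ) :
    rootSumChar ψ f (h ^ r) = rootSumChar ψ f h ^ r := by
  simp only [rootSumChar, rootSum_pow f h0, AddChar.map_nsmul_eq_pow]

end RootSumChar

section LFunction

variable (F : Type*) [Field F] [Finite F]

theorem finite_monic_natDegree_eq (n : ℕ) : {h : F[X] | h.Monic ∧ h.natDegree = n}.Finite := by
  have : Finite (degreeLT F (n + 1)) := Finite.of_equiv _ (degreeLTEquiv F (n + 1)).symm.toEquiv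
  refine (Set.toFinite (degreeLT F (n + 1) : Set F[X])).subset ?_
  rintro h ⟨-, hn⟩
  exact mem_degreeLT.2 (degree_le_natDegree.trans_lt (by rw [hn]; exact_mod_cast n.lt_succ_self))

/-- The monic polynomials of degree `n` over a finite field. -/
noncomputable def monicOfDegree (n : ℕ) : Finset F[X] :=
  (finite_monic_natDegree_eq F n).toFinset

open scoped Classical in
/-- The prime powers of degree `m` in `F[X]`, each encoded as a pair `(P, r)` standing for
`P ^ r`. -/
noncomputable def primePowersOfDegree (m : ℕ) : Finset (F[X] × ℕ) :=
  {x ∈ m.divisors.biUnion (monicOfDegree F) ×ˢ m.divisors |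
    Irreducible x.1 ∧ x.1.natDegree * x.2 = m}

variable {F} {h : F[X]} {n m : ℕ}

theorem mem_monicOfDegree : h ∈ monicOfDegree F n ↔ h.Monic ∧ h.natDegree = n := by
  simp [monicOfDegree]

theorem monicOfDegree_zero : monicOfDegree F 0 = {1} := by
  ext h
  rw [mem_monicOfDegree, Finset.mem_singleton]
  exact ⟨fun hh => hh.1.natDegree_eq_zero.1 hh.2, by rintro rfl; simp⟩

theorem mem_primePowersOfDegree {x : F[X] × ℕ} :
    x ∈ primePowersOfDegree F m ↔
      x.1.Monic ∧ Irreducible x.1 ∧ x.1.natDegree * x.2 = m ∧ m ≠ 0 := by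
  simp only [primePowersOfDegree, Finset.mem_filter, Finset.mem_product, Finset.mem_biUnion,
    mem_monicOfDegree, Nat.mem_divisors]
  constructor
  · rintro ⟨⟨⟨-, ⟨-, hm⟩, hmonic, -⟩, -⟩, hirr, hdeg⟩
    exact ⟨hmonic, hirr, hdeg, hm⟩
  · rintro ⟨hmonic, hirr, hdeg, hm⟩
    exact ⟨⟨⟨_, ⟨⟨_, hdeg.symm⟩, hm⟩, hmonic, rfl⟩, ⟨_, (mul_comm _ _).trans hdeg |>.symm⟩, hm⟩,
      hirr, hdeg⟩

open UniqueFactorizationMonoid in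
open scoped Classical in
/-- Each monic irreducible factor `P` of `h` contributes `deg P` once for every power of it that
divides `h`; this is the analogue of `∑_{d ∣ n} Λ(d) = log n`. -/
theorem sum_natDegree_primePowersOfDegree_dvd (hh : h ∈ monicOfDegree F n) :
    ∑ m ∈ Finset.Icc 1 n, ∑ x ∈ primePowersOfDegree F m with x.1 ^ x.2 ∣ h, x.1.natDegree = n := by
  obtain ⟨hm, rfl⟩ := mem_monicOfDegree.1 hh
  conv_rhs => rw [← sum_count_normalizedFactors_mul_natDegree hm]
  have count_eq (P : F[X]) : (normalizedFactors h).count P * P.natDegree =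
      ∑ _r ∈ Finset.Icc 1 ((normalizedFactors h).count P), P.natDegree := by simp
  simp_rw [count_eq]
  rw [Finset.sum_sigma', Finset.sum_sigma']
  refine Finset.sum_bij' (fun y _ => ⟨y.2.1, y.2.2⟩)
    (fun y _ => ⟨y.1.natDegree * y.2, (y.1, y.2)⟩) ?_ ?_ ?_ ?_ ?_
  · rintro ⟨m, P, r⟩ hy
    simp only [Finset.mem_sigma, Finset.mem_filter, mem_primePowersOfDegree] at hy
    obtain ⟨-, ⟨hP, hirr, hdeg, hm0⟩, hdvd⟩ := hy
    have hr : 1 ≤ r := by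
      by_contra! hr
      exact hm0 (by simp [← hdeg, Nat.lt_one_iff.1 hr])
    have hcount := (pow_dvd_iff_le_count_normalizedFactors hm.ne_zero hP hirr r).1 hdvd
    simp only [Finset.mem_sigma, Finset.mem_Icc, Multiset.mem_toFinset]
    exact ⟨Multiset.count_pos.1 (by omega), hr, hcount⟩
  · rintro ⟨P, r⟩ hy
    simp only [Finset.mem_sigma, Finset.mem_Icc, Multiset.mem_toFinset] at hy
    obtain ⟨hP, hr, hcount⟩ := hy
    have hirr := irreducible_of_normalized_factor P hP
    have hmonic := monic_of_mem_normalizedFactors hP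
    have hdvd := (pow_dvd_iff_le_count_normalizedFactors hm.ne_zero hmonic hirr r).2 hcount
    have hpos : 0 < P.natDegree * r := Nat.mul_pos hirr.natDegree_pos hr
    have hle := natDegree_le_of_dvd hdvd hm.ne_zero
    rw [natDegree_pow, mul_comm] at hle
    simp only [Finset.mem_sigma, Finset.mem_Icc, Finset.mem_filter, mem_primePowersOfDegree]
    exact ⟨⟨hpos, hle⟩, ⟨hmonic, hirr, trivial, hpos.ne'⟩, hdvd⟩
  · rintro ⟨m, P, r⟩ hy
    simp only [Finset.mem_sigma, Finset.mem_filter, mem_primePowersOfDegree] at hy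
    obtain ⟨-, ⟨-, -, rfl, -⟩, -⟩ := hy
    rfl
  · rintro ⟨P, r⟩ -; rfl
  · rintro ⟨m, P, r⟩ -; rfl

variable (ψ : AddChar F ℂ) (f : F[X])

/-- The coefficient of `T ^ n` in the `L`-function of `rootSumChar ψ f`. -/
noncomputable def lCoeff (n : ℕ) : ℂ := ∑ h ∈ monicOfDegree F n, rootSumChar ψ f h

/-- The coefficient of `T ^ m` in `T L'(T) / L(T)`, where `L` is the `L`-function of
`rootSumChar ψ f`. -/
noncomputable def lPowerSum (m : ℕ) : ℂ :=
  ∑ x ∈ primePowersOfDegree F m, x.1.natDegree * rootSumChar ψ f x.1 ^ x.2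

theorem lCoeff_zero : lCoeff ψ f 0 = 1 := by
  simp [lCoeff, monicOfDegree_zero, rootSumChar, rootSum_one]

open scoped Classical in
theorem sum_rootSumChar_of_dvd {g : F[X]} (hg : g.Monic) (hgn : g.natDegree ≤ n) :
    ∑ h ∈ monicOfDegree F n with g ∣ h, rootSumChar ψ f h =
      rootSumChar ψ f g * lCoeff ψ f (n - g.natDegree) := by
  rw [lCoeff, Finset.mul_sum]
  symm
  refine Finset.sum_bij (fun h _ => g * h) ?_ (fun _ _ _ _ => mul_left_cancel₀ hg.ne_zero) ?_ ?_
  · intro h hh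
    obtain ⟨hm, hdeg⟩ := mem_monicOfDegree.1 hh
    rw [Finset.mem_filter, mem_monicOfDegree, hg.natDegree_mul hm]
    exact ⟨⟨hg.mul hm, by omega⟩, dvd_mul_right _ _⟩
  · intro h hh
    rw [Finset.mem_filter, mem_monicOfDegree] at hh
    obtain ⟨⟨hm, hdeg⟩, h', rfl⟩ := hh
    have hm' := hg.of_mul_monic_left hm
    rw [hg.natDegree_mul hm'] at hdeg
    exact ⟨h', mem_monicOfDegree.2 ⟨hm', by omega⟩, rfl⟩
  · exact fun h hh => (rootSumChar_mul ψ f hg.ne_zero (mem_monicOfDegree.1 hh).1.ne_zero).symm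

/-- The identity `T L' = (T L' / L) L`, read off coefficientwise. -/
theorem natCast_mul_lCoeff (n : ℕ) :
    (n : ℂ) * lCoeff ψ f n = ∑ m ∈ Finset.Icc 1 n, lPowerSum ψ f m * lCoeff ψ f (n - m) := by
  classical
  calc (n : ℂ) * lCoeff ψ f n
      = ∑ h ∈ monicOfDegree F n, ∑ m ∈ Finset.Icc 1 n, ∑ x ∈ primePowersOfDegree F m,
          if x.1 ^ x.2 ∣ h then x.1.natDegree * rootSumChar ψ f h else 0 := by
        rw [lCoeff, Finset.mul_sum]
        refine Finset.sum_congr rfl fun h hh => ?_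
        conv_lhs => rw [← sum_natDegree_primePowersOfDegree_dvd hh]
        simp only [Finset.sum_filter, Nat.cast_sum, Nat.cast_ite, Nat.cast_zero, Finset.sum_mul,
          ite_mul, zero_mul]
    _ = ∑ m ∈ Finset.Icc 1 n, ∑ x ∈ primePowersOfDegree F m, x.1.natDegree *
          ∑ h ∈ monicOfDegree F n with x.1 ^ x.2 ∣ h, rootSumChar ψ f h := by
        rw [Finset.sum_comm]
        refine Finset.sum_congr rfl fun m _ => ?_
        rw [Finset.sum_comm]
        simp only [Finset.mul_sum, Finset.sum_filter, mul_ite, mul_zero]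
    _ = _ := by
        refine Finset.sum_congr rfl fun m hm => ?_
        rw [lPowerSum, Finset.sum_mul]
        refine Finset.sum_congr rfl fun x hx => ?_
        obtain ⟨hmonic, -, hdeg, -⟩ := mem_primePowersOfDegree.1 hx
        have hpow : (x.1 ^ x.2).natDegree = m := by rw [natDegree_pow, mul_comm, hdeg]
        rw [sum_rootSumChar_of_dvd ψ f (hmonic.pow _) (hpow.trans_le (Finset.mem_Icc.1 hm).2),
          hpow, rootSumChar_pow ψ f hmonic.ne_zero, mul_assoc]

theorem add_C_mul_X_pow_mem_monicOfDegree (hh : h ∈ monicOfDegree F n) {d : ℕ} (hd : 0 < d)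
    (hdn : d ≤ n) (c : F) : h + C c * X ^ (n - d) ∈ monicOfDegree F n := by
  obtain ⟨hm, rfl⟩ := mem_monicOfDegree.1 hh
  have hlt : (C c * X ^ (h.natDegree - d)).degree < h.degree := by
    rw [degree_eq_natDegree hm.ne_zero]
    exact (degree_C_mul_X_pow_le _ _).trans_lt (by exact_mod_cast Nat.sub_lt (by omega) hd)
  exact mem_monicOfDegree.2 ⟨hm.add_of_left hlt, natDegree_add_C_mul_X_pow hd hdn c⟩

variable {ψ f}

theorem lCoeff_eq_zero (hψ : ψ ≠ 1) (hd : (f.natDegree : F) ≠ 0) (hn : f.natDegree ≤ n) :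
    lCoeff ψ f n = 0 := by
  obtain ⟨b, hb⟩ := AddChar.ne_one_iff.1 hψ
  have hd0 : 0 < f.natDegree := Nat.pos_of_ne_zero (by rintro h; simp [h] at hd)
  have hlead : f.leadingCoeff ≠ 0 := leadingCoeff_ne_zero.2 (ne_zero_of_natDegree_gt hd0)
  obtain ⟨c, hc⟩ : ∃ c, f.leadingCoeff * (f.natDegree * c) = -b :=
    ⟨-b / (f.leadingCoeff * f.natDegree), by field_simp⟩
  have hinv : ψ b * lCoeff ψ f n = lCoeff ψ f n := by
    rw [lCoeff, Finset.mul_sum]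
    refine Finset.sum_bij' (fun h _ => h + C c * X ^ (n - f.natDegree))
      (fun h _ => h + C (-c) * X ^ (n - f.natDegree))
      (fun _ hh => add_C_mul_X_pow_mem_monicOfDegree hh hd0 hn c)
      (fun _ hh => add_C_mul_X_pow_mem_monicOfDegree hh hd0 hn (-c))
      (fun _ _ => by simp) (fun _ _ => by simp) fun h hh => ?_
    obtain ⟨hm, rfl⟩ := mem_monicOfDegree.1 hh
    rw [rootSumChar, rootSumChar, rootSum_add_C_mul_X_pow hm hd0 hn, hc, sub_neg_eq_add,
      AddChar.map_add_eq_mul, mul_comm]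
  exact (mul_left_eq_self₀.1 hinv).resolve_left hb

end LFunction

section TraceFormula

open IntermediateField

variable {F K : Type*} [Field F] [Field K] [Algebra F K] {f : F[X]}

theorem trace_aeval_eq_nsmul_trace_adjoin [FiniteDimensional F K] (f : F[X]) (x : K) :
    Algebra.trace F K (aeval x f) = (Module.finrank F K / (minpoly F x).natDegree) •
      Algebra.trace F F⟮x⟯ (aeval (AdjoinSimple.gen F x) f) := by
  have hint : IsIntegral F x := .of_finite F x
  have hfinrank : Module.finrank F⟮x⟯ K = Module.finrank F K / (minpoly F x).natDegree := by
    rw [← Module.finrank_mul_finrank F F⟮x⟯ K, adjoin.finrank hint,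
      Nat.mul_div_cancel_left _ (minpoly.natDegree_pos hint)]
  have hgen : algebraMap F⟮x⟯ K (aeval (AdjoinSimple.gen F x) f) = aeval x f := by
    rw [← aeval_algebraMap_apply, AdjoinSimple.algebraMap_gen]
  rw [← hgen, ← Algebra.trace_trace (S := F⟮x⟯), Algebra.trace_algebraMap,
    LinearMap.map_smul_of_tower, hfinrank]

theorem trace_aeval_gen_eq_rootSum [Algebra.IsSeparable F K] (hf : f.coeff 0 = 0)
    (pb : PowerBasis F K) :
    Algebra.trace F K (aeval pb.gen f) = rootSum f (minpoly F pb.gen) := by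
  classical
  let E := AlgebraicClosure F
  have : FiniteDimensional F K := pb.finite
  have hmonic : (minpoly F pb.gen).Monic := minpoly.monic pb.isIntegral_gen
  have hnodup : ((minpoly F pb.gen).aroots E).Nodup :=
    nodup_aroots_iff_of_splits hmonic.ne_zero (IsAlgClosed.splits _) |>.2
      (Algebra.IsSeparable.isSeparable F pb.gen)
  have hprod := (IsAlgClosed.splits
    ((minpoly F pb.gen).map (algebraMap F E))).eq_prod_roots_of_monic (hmonic.map _)
  apply (algebraMap F E).injective
  calc algebraMap F E (Algebra.trace F K (aeval pb.gen f))
      = ∑ σ : K →ₐ[F] E, (f.map (algebraMap F E)).eval (pb.liftEquiv' σ).1 := by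
        rw [trace_eq_sum_embeddings E]
        simp only [PowerBasis.liftEquiv'_apply_coe, eval_map_algebraMap, aeval_algHom_apply]
    _ = ∑ y : {y // y ∈ (minpoly F pb.gen).aroots E}, (f.map (algebraMap F E)).eval y.1 :=
        Fintype.sum_equiv pb.liftEquiv' _ _ fun _ => rfl
    _ = (((minpoly F pb.gen).aroots E).map fun y => (f.map (algebraMap F E)).eval y).sum := by
        rw [Finset.sum_mem_multiset _ _ (fun y => (f.map (algebraMap F E)).eval y) fun _ => rfl,
          Finset.sum_eq_multiset_sum, Multiset.toFinset_val, hnodup.dedup]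
    _ = algebraMap F E (rootSum f (minpoly F pb.gen)) := by
        rw [← rootSum_map f _ hmonic.ne_zero, hprod, rootSum_prod_X_sub_C (by simp [hf])]

theorem trace_aeval_eq_nsmul_rootSum [FiniteDimensional F K] [Algebra.IsSeparable F K]
    (hf : f.coeff 0 = 0) (x : K) :
    Algebra.trace F K (aeval x f) =
      (Module.finrank F K / (minpoly F x).natDegree) • rootSum f (minpoly F x) := by
  have hint : IsIntegral F x := .of_finite F x
  have hgen := trace_aeval_gen_eq_rootSum hf (adjoin.powerBasis hint)
  rw [adjoin.powerBasis_gen hint, minpoly_gen] at hgen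
  rw [trace_aeval_eq_nsmul_trace_adjoin, hgen]

variable [Finite F] [Fintype K]

open scoped Classical in
theorem card_filter_minpoly_eq {P : F[X]} (hP : P.Monic) (hirr : Irreducible P)
    (hdvd : P.natDegree ∣ Module.finrank F K) :
    (Finset.univ.filter fun x : K => minpoly F x = P).card = P.natDegree := by
  have hfilter : ({x : K | minpoly F x = P} : Finset K) = (P.aroots K).toFinset := by
    ext x
    rw [Finset.mem_filter_univ, Multiset.mem_toFinset, mem_aroots]
    exact ⟨by rintro rfl; exact ⟨hP.ne_zero, minpoly.aeval _ x⟩,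
      fun hx => (minpoly.eq_of_irreducible_of_monic hirr hx.2 hP).symm⟩
  have hsplits : (P.map (algebraMap F K)).Splits := by
    have hX := Polynomial.map_dvd (algebraMap F K)
      ((hirr.natDegree_dvd_iff_dvd_X_pow_card_pow_sub_X).1 hdvd)
    rw [← Module.natCard_eq_pow_finrank, Nat.card_eq_fintype_card] at hX
    exact (FiniteField.isSplittingField_sub K F).splits.of_dvd
      (map_ne_zero (FiniteField.X_pow_card_sub_X_ne_zero F Fintype.one_lt_card)) hX
  rw [hfilter, Multiset.toFinset_card_of_nodup, ← hsplits.natDegree_eq_card_roots, natDegree_map]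
  exact nodup_roots ((separable_map _).2 (PerfectField.separable_of_irreducible hirr))

theorem lPowerSum_finrank (ψ : AddChar F ℂ) (hf : f.coeff 0 = 0) :
    lPowerSum ψ f (Module.finrank F K) = ∑ x : K, ψ (Algebra.trace F K (aeval x f)) := by
  classical
  have : Module.Finite F K := .of_finite
  have hfinrank : Module.finrank F K ≠ 0 := Module.finrank_pos.ne'
  rw [← Finset.sum_fiberwise_of_maps_to (t := primePowersOfDegree F (Module.finrank F K))
    (g := fun x : K => (minpoly F x, Module.finrank F K / (minpoly F x).natDegree))]
  · refine Finset.sum_congr rfl ?_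
    rintro ⟨P, r⟩ hx
    obtain ⟨hP, hirr, hdeg, -⟩ := mem_primePowersOfDegree.1 hx
    have hr : Module.finrank F K / P.natDegree = r :=
      Nat.div_eq_of_eq_mul_right hirr.natDegree_pos hdeg.symm
    have hfiber (x : K) : (minpoly F x, Module.finrank F K / (minpoly F x).natDegree) = (P, r) ↔
        minpoly F x = P := by
      rw [Prod.mk_inj, and_iff_left_iff_imp]
      rintro rfl
      exact hr
    simp only [hfiber]
    rw [Finset.sum_congr rfl (g := fun _ => rootSumChar ψ f P ^ r), Finset.sum_const,
      card_filter_minpoly_eq hP hirr ⟨r, hdeg.symm⟩, nsmul_eq_mul]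
    intro x hx
    rw [trace_aeval_eq_nsmul_rootSum hf, (Finset.mem_filter.1 hx).2, hr,
      AddChar.map_nsmul_eq_pow, rootSumChar]
  · intro x _
    have hint : IsIntegral F x := .of_finite F x
    exact mem_primePowersOfDegree.2 ⟨minpoly.monic hint, minpoly.irreducible hint,
      Nat.mul_div_cancel' (minpoly.degree_dvd hint), hfinrank⟩

end TraceFormula

section RootsFromLogDerivative

open Asymptotics Filter Topology

theorem coeff_X_mul_derivative {R : Type*} [CommSemiring R] (p : R[X]) (n : ℕ) :
    (X * p.derivative).coeff n = n * p.coeff n := by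
  cases n with
  | zero => simp
  | succ n => rw [coeff_X_mul, coeff_derivative, mul_comm, Nat.cast_succ]

theorem not_isBigO_eval_derivative {E : ℂ[X]} (hE : E ≠ 0) {ρ : ℂ} (hρ : E.IsRoot ρ) :
    ¬(fun z => E.derivative.eval z) =O[𝓝[≠] ρ] fun z => E.eval z := by
  intro hO
  obtain ⟨k, hk⟩ := Nat.exists_eq_succ_of_ne_zero ((rootMultiplicity_pos hE).2 hρ).ne'
  obtain ⟨Q, hQ, hQρ⟩ := exists_eq_pow_rootMultiplicity_mul_and_not_dvd E hE ρ
  rw [hk, Nat.succ_eq_add_one] at hQ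
  have hO' : (fun z => (k + 1) * Q.eval z + (z - ρ) * Q.derivative.eval z) =O[𝓝[≠] ρ]
      fun z => (z - ρ) * Q.eval z := by
    refine (hO.mul (isBigO_refl (fun z => ((z - ρ) ^ k)⁻¹) _)).congr' ?_ ?_ <;>
      filter_upwards [self_mem_nhdsWithin] with z hz <;>
      rw [hQ, mul_inv_eq_iff_eq_mul₀ (pow_ne_zero k (sub_ne_zero.2 hz))]
    · simp only [derivative_mul, derivative_X_sub_C_pow, eval_add, eval_mul, eval_pow, eval_sub,
        eval_X, eval_C, Nat.cast_add, Nat.cast_one, Nat.add_sub_cancel]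
      ring
    · simp only [eval_mul, eval_pow, eval_sub, eval_X, eval_C, pow_succ]
      ring
  have hright : Tendsto (fun z => (z - ρ) * Q.eval z) (𝓝[≠] ρ) (𝓝 0) := by
    have hcont : Continuous fun z => (z - ρ) * Q.eval z := by fun_prop
    simpa using hcont.continuousAt.tendsto.mono_left (nhdsWithin_le_nhds (a := ρ) (s := {ρ}ᶜ))
  have hleft : Tendsto (fun z => (k + 1) * Q.eval z + (z - ρ) * Q.derivative.eval z) (𝓝[≠] ρ)
      (𝓝 ((k + 1) * Q.eval ρ)) := by
    have hcont : Continuous fun z => (k + 1) * Q.eval z + (z - ρ) * Q.derivative.eval z := by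
      fun_prop
    simpa using hcont.continuousAt.tendsto.mono_left (nhdsWithin_le_nhds (a := ρ) (s := {ρ}ᶜ))
  have hlim : (k + 1) * Q.eval ρ = 0 := tendsto_nhds_unique hleft (hO'.trans_tendsto hright)
  exact hQρ (dvd_iff_isRoot.2 ((mul_eq_zero.1 hlim).resolve_left k.cast_add_one_ne_zero))

theorem hasSum_coeff_mul_pow (A : ℂ[X]) (z : ℂ) :
    HasSum (fun n => A.coeff n * z ^ n) (A.eval z) := by
  rw [eval_eq_sum_range]
  refine hasSum_sum_of_ne_finset_zero fun n hn => ?_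
  rw [coeff_eq_zero_of_natDegree_lt (by simpa using hn), zero_mul]

theorem eval_eq_tsum_mul_eval {A E : ℂ[X]} {t : PowerSeries ℂ}
    (h : (A : PowerSeries ℂ) = t * E) {z : ℂ} (ht : Summable fun n => ‖t.coeff n * z ^ n‖) :
    A.eval z = (∑' n, t.coeff n * z ^ n) * E.eval z := by
  have hE : Summable fun n => ‖E.coeff n * z ^ n‖ := (hasSum_coeff_mul_pow E z).summable.norm
  rw [← (hasSum_coeff_mul_pow A z).tsum_eq, ← (hasSum_coeff_mul_pow E z).tsum_eq,
    tsum_mul_tsum_eq_tsum_sum_antidiagonal_of_summable_norm ht hE]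
  refine tsum_congr fun n => ?_
  rw [← Polynomial.coeff_coe, h, PowerSeries.coeff_mul, Finset.sum_mul]
  refine Finset.sum_congr rfl fun x hx => ?_
  rw [← Finset.HasAntidiagonal.mem_antidiagonal.1 hx, pow_add, Polynomial.coeff_coe]
  ring

theorem norm_eval_le_of_norm_coeff_le {A E : ℂ[X]} {t : PowerSeries ℂ}
    (h : (A : PowerSeries ℂ) = t * E) {M r R : ℝ} (hr : 0 ≤ r) (hrR : r * R < 1)
    (ht : ∀ n, ‖t.coeff n‖ ≤ M * r ^ n) {z : ℂ} (hz : ‖z‖ ≤ R) :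
    ‖A.eval z‖ ≤ (∑' n, M * (r * R) ^ n) * ‖E.eval z‖ := by
  have hR : 0 ≤ R := (norm_nonneg z).trans hz
  have hterm (n : ℕ) : ‖t.coeff n * z ^ n‖ ≤ M * (r * R) ^ n := by
    rw [norm_mul, norm_pow, mul_pow, ← mul_assoc]
    exact mul_le_mul (ht n) (by gcongr) (by positivity) ((norm_nonneg _).trans (ht n))
  have hgeom : Summable fun n => M * (r * R) ^ n :=
    (summable_geometric_of_lt_one (by positivity) hrR).mul_left M
  have hsum : Summable fun n => ‖t.coeff n * z ^ n‖ :=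
    hgeom.of_nonneg_of_le (fun _ => norm_nonneg _) hterm
  rw [eval_eq_tsum_mul_eval h hsum, norm_mul]
  gcongr
  exact (norm_tsum_le_tsum_norm hsum).trans (hsum.tsum_le_tsum hterm hgeom)

theorem inv_le_norm_of_isRoot {E : ℂ[X]} (hE : E.coeff 0 ≠ 0) {t : PowerSeries ℂ}
    (h : ((X * E.derivative : ℂ[X]) : PowerSeries ℂ) = t * E) {M r : ℝ} (hr : 0 < r)
    (ht : ∀ n, ‖t.coeff n‖ ≤ M * r ^ n) {ρ : ℂ} (hρ : E.IsRoot ρ) : r⁻¹ ≤ ‖ρ‖ := by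
  by_contra! hlt
  obtain ⟨R, hρR, hR⟩ := exists_between hlt
  have hrR : r * R < 1 := by rwa [← lt_inv_mul_iff₀ hr, mul_one]
  have hρ0 : ρ ≠ 0 := by
    rintro rfl
    exact hE (by rw [coeff_zero_eq_eval_zero]; exact hρ)
  -- Near the nonzero root `ρ`, where `t` converges, `z E' = t E` forces `E' = O(E)`.
  refine not_isBigO_eval_derivative (by rintro rfl; simp at hE) hρ ?_
  have hO : (fun z => z * E.derivative.eval z) =O[𝓝[≠] ρ] fun z => E.eval z := by
    refine IsBigO.of_bound (∑' n, M * (r * R) ^ n) ?_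
    filter_upwards [nhdsWithin_le_nhds (continuous_norm.continuousAt.eventually_lt_const hρR)]
      with z hz
    simpa only [eval_mul, eval_X] using norm_eval_le_of_norm_coeff_le h hr.le hrR ht hz.le
  have hinv : (fun z : ℂ => z⁻¹) =O[𝓝[≠] ρ] fun _ => (1 : ℂ) :=
    ((continuousAt_inv₀ hρ0).tendsto.mono_left nhdsWithin_le_nhds).isBigO_one ℂ
  refine (hinv.mul hO).congr' ?_ (by simp)
  filter_upwards [nhdsWithin_le_nhds (eventually_ne_nhds hρ0)] with z hz
  rw [inv_mul_cancel_left₀ hz]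

theorem inv_le_norm_of_isRoot_of_even {L : ℂ[X]} (hL : L.coeff 0 ≠ 0) {s : PowerSeries ℂ}
    (h : ((X * L.derivative : ℂ[X]) : PowerSeries ℂ) = s * L) {M r : ℝ} (hr : 0 < r)
    (hs : ∀ m, ‖s.coeff (2 * m)‖ ≤ M * r ^ (2 * m)) {ρ : ℂ} (hρ : L.IsRoot ρ) : r⁻¹ ≤ ‖ρ‖ := by
  set N : ℂ[X] := L.comp (C (-1) * X) with hN
  have hNL : PowerSeries.rescale (-1 : ℂ) L = N := by
    ext n
    rw [PowerSeries.coeff_rescale, Polynomial.coeff_coe, Polynomial.coeff_coe, hN,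
      comp_C_mul_X_coeff, mul_comm]
  have hN' : ((X * N.derivative : ℂ[X]) : PowerSeries ℂ) = PowerSeries.rescale (-1) s * N := by
    rw [← hNL, ← map_mul, ← h]
    ext n
    rw [PowerSeries.coeff_rescale, Polynomial.coeff_coe, Polynomial.coeff_coe,
      coeff_X_mul_derivative, coeff_X_mul_derivative, hN, comp_C_mul_X_coeff]
    ring
  have hLN : ((X * (L * N).derivative : ℂ[X]) : PowerSeries ℂ) =
      (s + PowerSeries.rescale (-1) s) * (L * N : ℂ[X]) := by
    have hder : X * (L * N).derivative = X * L.derivative * N + L * (X * N.derivative) := by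
      rw [derivative_mul]; ring
    rw [hder, Polynomial.coe_add, Polynomial.coe_mul _ N, h, Polynomial.coe_mul L, hN',
      Polynomial.coe_mul]
    ring
  have hM : 0 ≤ M := by simpa using (norm_nonneg _).trans (hs 0)
  refine inv_le_norm_of_isRoot (M := 2 * M) ?_ hLN hr (fun n => ?_) (root_mul_right_of_isRoot N hρ)
  · rw [mul_coeff_zero, hN, comp_C_mul_X_coeff]
    simpa using hL
  rw [map_add, PowerSeries.coeff_rescale]
  rcases n.even_or_odd' with ⟨m, rfl | rfl⟩
  · rw [pow_mul, neg_one_sq, one_pow, one_mul, ← two_mul, norm_mul, Complex.norm_ofNat, mul_assoc]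
    gcongr
    exact hs m
  · rw [pow_succ, pow_mul, neg_one_sq, one_pow, one_mul, neg_one_mul, add_neg_cancel, norm_zero]
    positivity

theorem norm_coeff_one_le {L : ℂ[X]} (hL : L.coeff 0 = 1) {r : ℝ} (hr : 0 < r)
    (hroots : ∀ ρ, L.IsRoot ρ → r⁻¹ ≤ ‖ρ‖) : ‖L.coeff 1‖ ≤ L.natDegree * r := by
  rcases Nat.eq_zero_or_pos L.natDegree with hdeg | hdeg
  · rw [coeff_eq_zero_of_natDegree_lt (by omega), norm_zero]
    positivity
  have htrailing : L.natTrailingDegree = 0 :=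
    natTrailingDegree_eq_zero.2 (.inr (by rw [hL]; exact one_ne_zero))
  have hmonic : L.reverse.Monic := by
    rw [Monic, reverse_leadingCoeff, trailingCoeff, htrailing, hL]
  have hrev {w : ℂ} (hw : w ∈ (L.reverse.map (RingHom.id ℂ)).roots) : ‖w‖ ≤ r := by
    rw [Polynomial.map_id, mem_roots hmonic.ne_zero] at hw
    by_cases hw0 : w = 0
    · rw [hw0, norm_zero]; exact hr.le
    have : Invertible w⁻¹ := invertibleOfNonzero (inv_ne_zero hw0)
    have hroot := hroots _ ((eval₂_reverse_eq_zero_iff (RingHom.id ℂ) w⁻¹ L).1 (by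
      rwa [invOf_eq_inv, inv_inv, eval₂_id]))
    rw [norm_inv] at hroot
    exact (inv_le_inv₀ hr (norm_pos_iff.2 hw0)).1 hroot
  have hcoeff := coeff_le_of_roots_le (L.natDegree - 1) hmonic (IsAlgClosed.splits _) @hrev
  rwa [Polynomial.map_id, reverse_natDegree, htrailing, Nat.sub_zero, coeff_reverse,
    revAt_le (by omega), show L.natDegree - (L.natDegree - 1) = 1 by omega, pow_one, mul_comm,
    Nat.choose_symm_of_eq_add (b := 1) (by omega), Nat.choose_one_right] at hcoeff

end RootsFromLogDerivative

section WeilBound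

variable {F : Type*} [Field F] {ψ : AddChar F ℂ} {f : F[X]}

/-- The `L`-function of `rootSumChar ψ f`. Cutting it off below `T ^ deg f` loses nothing when `ψ`
is nontrivial and `deg f` is invertible in `F`. -/
noncomputable def lPolynomial [Finite F] (ψ : AddChar F ℂ) (f : F[X]) : ℂ[X] :=
  ∑ i ∈ Finset.range f.natDegree, monomial i (lCoeff ψ f i)

section

variable [Finite F]

theorem coeff_lPolynomial (hψ : ψ ≠ 1) (hd : (f.natDegree : F) ≠ 0) (n : ℕ) :
    (lPolynomial ψ f).coeff n = lCoeff ψ f n := by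
  simp only [lPolynomial, finsetSum_coeff, coeff_monomial, Finset.sum_ite_eq', Finset.mem_range]
  exact ite_eq_left_iff.2 fun hn => (lCoeff_eq_zero hψ hd (not_lt.1 hn)).symm

theorem natDegree_lPolynomial_lt (hd : f.natDegree ≠ 0) :
    (lPolynomial ψ f).natDegree < f.natDegree :=
  (Nat.le_sub_one_iff_lt (Nat.pos_of_ne_zero hd)).1 <| natDegree_sum_le_of_forall_le _ _ fun _ hi =>
    (natDegree_monomial_le _).trans (Nat.le_sub_one_of_lt (Finset.mem_range.1 hi))

theorem lPowerSum_zero : lPowerSum ψ f 0 = 0 :=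
  Finset.sum_eq_zero fun _ hx => absurd rfl (mem_primePowersOfDegree.1 hx).2.2.2

theorem X_mul_derivative_lPolynomial (hψ : ψ ≠ 1) (hd : (f.natDegree : F) ≠ 0) :
    ((X * (lPolynomial ψ f).derivative : ℂ[X]) : PowerSeries ℂ) =
      PowerSeries.mk (lPowerSum ψ f) * lPolynomial ψ f := by
  ext n
  rw [Polynomial.coeff_coe, coeff_X_mul_derivative, PowerSeries.coeff_mul]
  simp only [PowerSeries.coeff_mk, Polynomial.coeff_coe, coeff_lPolynomial hψ hd]
  rw [natCast_mul_lCoeff, Finset.Nat.sum_antidiagonal_eq_sum_range_succ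
    (fun i j => lPowerSum ψ f i * lCoeff ψ f j), Finset.range_eq_Ico,
    Finset.sum_eq_sum_Ico_succ_bot (by omega), lPowerSum_zero, zero_mul, zero_add,
    ← Finset.Ico_add_one_right_eq_Icc, zero_add, Nat.succ_eq_add_one]

end

variable [Fintype F]

theorem lCoeff_one (hf : f.coeff 0 = 0) :
    lCoeff ψ f 1 = ∑ x : F, ψ (f.eval x) := by
  have hrec : lCoeff ψ f 1 = lPowerSum ψ f 1 := by
    simpa [lCoeff_zero] using natCast_mul_lCoeff ψ f 1
  have htrace := lPowerSum_finrank (K := F) ψ hf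
  rw [Module.finrank_self] at htrace
  simp only [hrec, htrace, Algebra.trace_self_apply, coe_aeval_eq_eval]

theorem natCast_ne_zero_of_coprime_card {n : ℕ} (hn : (Fintype.card F).Coprime n) :
    (n : F) ≠ 0 := by
  obtain ⟨p, hchar⟩ := CharP.exists F
  have hp := CharP.char_is_prime F p
  rw [Ne, CharP.cast_eq_zero_iff F p]
  exact fun hdvd => hp.one_lt.ne' (Nat.eq_one_of_dvd_coprimes hn
    ((CharP.cast_eq_zero_iff F p _).1 (Nat.cast_card_eq_zero F)) hdvd)

theorem norm_lPowerSum_two_mul_le (hf : f.coeff 0 = 0) (hd : 0 < f.natDegree)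
    (hdq : (Fintype.card F).Coprime f.natDegree) (hψ : ψ ≠ 1) (m : ℕ) :
    ‖lPowerSum ψ f (2 * m)‖ ≤
      4 * Fintype.card F * f.natDegree * √(Fintype.card F) ^ (2 * m) := by
  obtain ⟨p, hchar⟩ := CharP.exists F
  have : Fact p.Prime := ⟨CharP.char_is_prime F p⟩
  rcases m with _ | μ
  · rw [mul_zero, lPowerSum_zero, norm_zero]
    positivity
  have : NeZero (2 * (μ + 1)) := ⟨by omega⟩
  let K := FiniteField.Extension F p (2 * (μ + 1))
  have : Fintype K := Fintype.ofFinite K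
  have hK : Module.finrank F K = 2 * (μ + 1) := FiniteField.finrank_extension F p _
  rw [← hK, lPowerSum_finrank ψ hf, hK, pow_mul, Real.sq_sqrt (Nat.cast_nonneg _)]
  exact (norm_sum_addChar_trace_le hd hdq hψ hK).trans_eq (by ring)

theorem norm_sum_addChar_eval_le_of_coeff_zero (hf : f.coeff 0 = 0) (hd : 0 < f.natDegree)
    (hdq : (Fintype.card F).Coprime f.natDegree) (hψ : ψ ≠ 1) :
    ‖∑ x : F, ψ (f.eval x)‖ ≤ (f.natDegree - 1) * √(Fintype.card F) := by
  have hdF := natCast_ne_zero_of_coprime_card hdq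
  have hcoeff := coeff_lPolynomial hψ hdF
  have hcoeff0 : (lPolynomial ψ f).coeff 0 = 1 := by rw [hcoeff, lCoeff_zero]
  have hsqrt : 0 < √(Fintype.card F : ℝ) := Real.sqrt_pos.2 (by exact_mod_cast Fintype.card_pos)
  have hroots (ρ : ℂ) (hρ : (lPolynomial ψ f).IsRoot ρ) : (√(Fintype.card F))⁻¹ ≤ ‖ρ‖ :=
    inv_le_norm_of_isRoot_of_even (by rw [hcoeff0]; exact one_ne_zero)
      (X_mul_derivative_lPolynomial hψ hdF) hsqrt
      (fun m => by
        rw [PowerSeries.coeff_mk]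
        exact norm_lPowerSum_two_mul_le hf hd hdq hψ m) hρ
  have hdeg : ((lPolynomial ψ f).natDegree : ℝ) ≤ f.natDegree - 1 := by
    rw [le_sub_iff_add_le]
    exact_mod_cast natDegree_lPolynomial_lt hd.ne'
  rw [← lCoeff_one hf, ← hcoeff]
  exact (norm_coeff_one_le hcoeff0 hsqrt hroots).trans (by gcongr)

theorem norm_sum_addChar_eval_le (hd : 0 < f.natDegree)
    (hdq : (Fintype.card F).Coprime f.natDegree) (hψ : ψ ≠ 1) :
    ‖∑ x : F, ψ (f.eval x)‖ ≤ (f.natDegree - 1) * √(Fintype.card F) := by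
  have hdeg : (f - C (f.coeff 0)).natDegree = f.natDegree := natDegree_sub_C
  have htwist : ∑ x, ψ (f.eval x) = ψ (f.coeff 0) * ∑ x, ψ ((f - C (f.coeff 0)).eval x) := by
    rw [Finset.mul_sum]
    refine Finset.sum_congr rfl fun x _ => ?_
    rw [← AddChar.map_add_eq_mul, eval_sub, eval_C, add_sub_cancel]
  have hbound := norm_sum_addChar_eval_le_of_coeff_zero (f := f - C (f.coeff 0)) (by simp)
    (by rwa [hdeg]) (by rwa [hdeg]) hψ
  rwa [htwist, norm_mul, AddChar.norm_apply, one_mul, ← hdeg]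

end WeilBound

section ExponentialSums

/-- The additive character `e_N(n) = e(n / N)` of period `N`. -/
noncomputable def eMod (N : ℕ) (n : ℤ) : ℂ :=
  e (n / N)

theorem eMod_eq_exp (N : ℕ) (n : ℤ) : eMod N n = Complex.exp (2 * Real.pi * Complex.I * n / N) := by
  simp [eMod, e, mul_div_assoc]

theorem eMod_add (N : ℕ) (m n : ℤ) : eMod N (m + n) = eMod N m * eMod N n := by
  simp only [eMod_eq_exp, ← Complex.exp_add, Int.cast_add, mul_add, add_div]

theorem norm_eMod (N : ℕ) (n : ℤ) : ‖eMod N n‖ = 1 := by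
  rw [← Complex.norm_exp_ofReal_mul_I (2 * Real.pi * (n / N)), eMod, e]
  push_cast
  ring_nf

theorem eMod_eq_one_of_dvd {N : ℕ} {n : ℤ} (h : (N : ℤ) ∣ n) : eMod N n = 1 := by
  obtain ⟨m, rfl⟩ := h
  rcases eq_or_ne N 0 with rfl | hN
  · simp [eMod_eq_exp]
  · rw [eMod_eq_exp, Complex.exp_eq_one_iff]
    exact ⟨m, by push_cast; field_simp⟩

theorem eMod_eq_of_dvd_sub {N : ℕ} {m n : ℤ} (h : (N : ℤ) ∣ m - n) : eMod N m = eMod N n := by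
  rw [← add_sub_cancel n m, eMod_add, eMod_eq_one_of_dvd h, mul_one]

theorem eMod_ne_one {N : ℕ} (hN : N ≠ 0) {n : ℤ} (h : ¬(N : ℤ) ∣ n) : eMod N n ≠ 1 := by
  rw [eMod_eq_exp, Ne, Complex.exp_eq_one_iff]
  rintro ⟨m, hm⟩
  refine h ⟨m, ?_⟩
  have hn : (n : ℂ) = N * m := by
    refine mul_left_cancel₀ Complex.two_pi_I_ne_zero ?_
    rw [div_eq_iff (Nat.cast_ne_zero.2 hN)] at hm
    rw [hm]
    ring
  exact_mod_cast hn

theorem eMod_mul_mul {M : ℕ} (hM : M ≠ 0) (N : ℕ) (n : ℤ) : eMod (M * N) (M * n) = eMod N n := by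
  simp only [eMod, Nat.cast_mul, Int.cast_mul, Int.cast_natCast]
  rw [mul_div_mul_left _ _ (Nat.cast_ne_zero.2 hM)]

theorem eMod_natCast_mul (N t : ℕ) (n : ℤ) : eMod N (t * n) = eMod N n ^ t := by
  rw [eMod_eq_exp, eMod_eq_exp, ← Complex.exp_nat_mul]
  push_cast
  ring_nf

theorem sum_eMod_mul_eq_zero {N : ℕ} (hN : N ≠ 0) {u : ℤ} (hu : ¬(N : ℤ) ∣ u) {B : ℕ} (hB : N ∣ B) :
    ∑ t ∈ Finset.range B, eMod N (t * u) = 0 := by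
  simp_rw [eMod_natCast_mul]
  rw [geom_sum_eq (eMod_ne_one hN hu), ← eMod_natCast_mul,
    eMod_eq_one_of_dvd ((Int.natCast_dvd_natCast.2 hB).mul_right u), sub_self, zero_div]

theorem norm_sum_eMod_le (s : Finset ℕ) (N : ℕ) (n : ℕ → ℤ) :
    ‖∑ x ∈ s, eMod N (n x)‖ ≤ s.card :=
  (norm_sum_le _ _).trans (by simp [norm_eMod])

theorem sum_range_mul_eq_sum_sum {M : Type*} [AddCommMonoid M] (A B : ℕ) (f : ℕ → M) :
    ∑ s ∈ Finset.range (A * B), f s =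
      ∑ r ∈ Finset.range A, ∑ t ∈ Finset.range B, f (r + A * t) := by
  rw [Finset.sum_comm]
  induction B with
  | zero => simp
  | succ B ih =>
    rw [Finset.sum_range_succ, ← ih, Nat.mul_succ, Finset.sum_range_add]
    simp_rw [add_comm _ (A * B)]

/-- The complete exponential sum `∑_{s mod N} e_N(f(s))`. -/
noncomputable def expSum (N : ℕ) (f : ℤ[X]) : ℂ :=
  ∑ s ∈ Finset.range N, eMod N (f.eval (s : ℤ))

theorem norm_expSum_le (N : ℕ) (f : ℤ[X]) : ‖expSum N f‖ ≤ N := by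
  simpa [expSum] using norm_sum_eMod_le (Finset.range N) N fun s => f.eval (s : ℤ)

theorem dvd_eval_iff_of_dvd_sub {d x y : ℤ} (f : ℤ[X]) (h : d ∣ x - y) :
    d ∣ f.eval x ↔ d ∣ f.eval y :=
  dvd_iff_dvd_of_dvd_sub (h.trans (f.sub_dvd_eval_sub x y))

theorem sum_range_mul_eMod_eval (N B : ℕ) (f : ℤ[X]) :
    ∑ s ∈ Finset.range (N * B), eMod N (f.eval (s : ℤ)) = B * expSum N f := by
  rw [sum_range_mul_eq_sum_sum, expSum, Finset.mul_sum]
  refine Finset.sum_congr rfl fun r _ => ?_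
  have hper (t : ℕ) : eMod N (f.eval ((r + N * t : ℕ) : ℤ)) = eMod N (f.eval (r : ℤ)) :=
    eMod_eq_of_dvd_sub (dvd_trans ⟨t, by push_cast; ring⟩ (f.sub_dvd_eval_sub _ _))
  simp only [hper, Finset.sum_const, Finset.card_range, nsmul_eq_mul]

theorem norm_sum_eMod_add_mul_eval {M : ℕ} (hM : M ≠ 0) (N B : ℕ) (a : ℤ) (f : ℤ[X]) :
    ‖∑ s ∈ Finset.range (N * B), eMod (M * N) (a + M * f.eval (s : ℤ))‖ = B * ‖expSum N f‖ := by
  simp_rw [eMod_add, eMod_mul_mul hM, ← Finset.mul_sum, sum_range_mul_eMod_eval, norm_mul,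
    norm_eMod, one_mul, Complex.norm_natCast]

theorem norm_expSum_mul_C_add_C_mul {M : ℕ} (hM : M ≠ 0) (N : ℕ) (a : ℤ) (f : ℤ[X]) :
    ‖expSum (M * N) (C a + C (M : ℤ) * f)‖ = M * ‖expSum N f‖ := by
  rw [← norm_sum_eMod_add_mul_eval hM N M a f, mul_comm N M, expSum]
  simp only [eval_add, eval_mul, eval_C]

theorem sum_range_natCast_zmod (N : ℕ) [NeZero N] {M : Type*} [AddCommMonoid M] (f : ZMod N → M) :
    ∑ s ∈ Finset.range N, f (s : ZMod N) = ∑ x : ZMod N, f x :=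
  Finset.sum_nbij' (fun s => (s : ZMod N)) ZMod.val (by simp) (by simp [ZMod.val_lt])
    (fun _ hs => ZMod.val_cast_of_lt (Finset.mem_range.1 hs)) (by simp) (by simp)

/-- Writing `s = r + p ^ m * t`, the sum over `t` is a full geometric sum whose ratio is governed by
the exact power of `p` dividing `f'(r)`. -/
theorem sum_filter_eMod_eval_eq_zero {p : ℕ} (hp : p ≠ 0) {m δ : ℕ} (hm : δ + 1 ≤ m) {f : ℤ[X]}
    {S : ℤ → Prop} [DecidablePred S] (hS : ∀ s t : ℤ, S (s + (p : ℤ) ^ m * t) ↔ S s)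
    (hdvd : ∀ s, S s → (p : ℤ) ^ δ ∣ f.derivative.eval s)
    (hndvd : ∀ s, S s → ¬(p : ℤ) ^ (δ + 1) ∣ f.derivative.eval s) :
    ∑ s ∈ Finset.range (p ^ (m + δ + 1)) with S ((s : ℕ) : ℤ),
      eMod (p ^ (m + δ + 1)) (f.eval (s : ℤ)) = 0 := by
  rw [Finset.sum_filter, add_assoc, pow_add, sum_range_mul_eq_sum_sum]
  refine Finset.sum_eq_zero fun r _ => ?_
  have hcast (t : ℕ) : ((r + p ^ m * t : ℕ) : ℤ) = r + (p : ℤ) ^ m * t := by push_cast; ring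
  simp only [hcast, hS]
  by_cases hr : S r
  · obtain ⟨u, hu⟩ := hdvd r hr
    have hpu : ¬(p : ℤ) ∣ u := by
      rintro ⟨v, rfl⟩
      exact hndvd r hr ⟨v, by rw [hu]; ring⟩
    have hshift (t : ℕ) : eMod (p ^ m * p ^ (δ + 1)) (f.eval (r + (p : ℤ) ^ m * t)) =
        eMod (p ^ m * p ^ (δ + 1)) (f.eval (r : ℤ)) * eMod p (t * u) := by
      obtain ⟨c, hc⟩ := f.binomExpansion (r : ℤ) ((p : ℤ) ^ m * t)
      obtain ⟨n, rfl⟩ := Nat.exists_eq_add_of_le hm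
      have hM : p ^ (δ + 1 + n) * p ^ δ ≠ 0 := by positivity
      rw [← eMod_mul_mul hM p, mul_assoc, ← pow_succ, ← eMod_add, hc, hu]
      exact eMod_eq_of_dvd_sub ⟨c * p ^ n * t ^ 2, by push_cast; ring⟩
    simp only [hr, if_true, hshift]
    rw [← Finset.mul_sum, sum_eMod_mul_eq_zero hp hpu (dvd_pow_self p δ.succ_ne_zero), mul_zero]
  · simp only [hr, if_false, Finset.sum_const_zero]

end ExponentialSums

section Content

theorem dvd_cont_iff {m : ℕ} {f : ℤ[X]} : m ∣ cont f ↔ ∀ i, 1 ≤ i → (m : ℤ) ∣ f.coeff i := by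
  simp only [cont, Finset.dvd_gcd_iff, Finset.mem_Icc, ← Int.natCast_dvd]
  refine ⟨fun h i hi => ?_, fun h i hi => h i hi.1⟩
  rcases le_or_gt i f.natDegree with hdeg | hdeg
  · exact h i ⟨hi, hdeg⟩
  · rw [coeff_eq_zero_of_natDegree_lt hdeg]
    exact dvd_zero _

theorem exists_not_dvd_coeff_of_not_dvd_cont {m : ℕ} {f : ℤ[X]} (h : ¬m ∣ cont f) :
    ∃ i, 1 ≤ i ∧ i ≤ f.natDegree ∧ ¬(m : ℤ) ∣ f.coeff i := by
  rw [dvd_cont_iff] at h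
  push Not at h
  obtain ⟨i, hi, hndvd⟩ := h
  exact ⟨i, hi, le_natDegree_of_ne_zero fun h0 => hndvd (h0 ▸ dvd_zero _), hndvd⟩

theorem cont_C_add (a : ℤ) (f : ℤ[X]) : cont (C a + f) = cont f := by
  rw [cont, cont, natDegree_C_add]
  refine Finset.gcd_congr rfl fun i hi => ?_
  rw [coeff_add, coeff_C_of_ne_zero (Nat.one_le_iff_ne_zero.1 (Finset.mem_Icc.1 hi).1), zero_add]

theorem cont_C_mul {a : ℤ} (ha : a ≠ 0) (f : ℤ[X]) : cont (C a * f) = a.natAbs * cont f := by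
  simp only [cont, natDegree_C_mul ha, coeff_C_mul, Int.natAbs_mul, Finset.gcd_mul_left,
    normalize_eq]

theorem derivative_ne_zero_of_cont_ne_zero {f : ℤ[X]} (h : cont f ≠ 0) : f.derivative ≠ 0 := by
  intro hderiv
  rw [derivative_eq_zero] at hderiv
  exact h (by simp [cont, hderiv])

theorem exists_eq_C_add_C_pow_mul {p : ℕ} (hp : p.Prime) {f : ℤ[X]} (h : cont f ≠ 0) :
    ∃ (σ : ℕ) (g : ℤ[X]), f = C (f.coeff 0) + C ((p : ℤ) ^ σ) * g ∧ ¬p ∣ cont g := by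
  obtain ⟨σ, m, hm, hσ⟩ := Nat.exists_eq_pow_mul_and_not_dvd h p hp.ne_one
  have hdvd : C ((p : ℤ) ^ σ) ∣ f - C (f.coeff 0) := by
    rw [C_dvd_iff_dvd_coeff]
    rintro (_ | i)
    · simp
    · rw [coeff_sub, coeff_C_succ, sub_zero]
      exact_mod_cast dvd_cont_iff.1 ⟨m, hσ⟩ _ i.succ_pos
  obtain ⟨g, hg⟩ := hdvd
  have hf : f = C (f.coeff 0) + C ((p : ℤ) ^ σ) * g := by rw [← hg, add_sub_cancel]
  have hp0 : (p : ℤ) ≠ 0 := Nat.cast_ne_zero.2 hp.ne_zero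
  have hcont : p ^ σ * cont g = p ^ σ * m := by
    rw [← hσ, hf, cont_C_add, cont_C_mul (pow_ne_zero _ hp0), Int.natAbs_pow, Int.natAbs_natCast]
  rw [← Nat.eq_of_mul_eq_mul_left (pow_pos hp.pos σ) hcont] at hm
  exact ⟨σ, g, hf, hm⟩

theorem dvd_superFactorial_mul_coeff {m : ℕ} {N : ℤ} {f : ℤ[X]} (hf : f.natDegree ≤ m)
    (hN : ∀ n : ℤ, N ∣ f.eval n) (i : ℕ) : N ∣ m.superFactorial * f.coeff i := by
  rcases lt_or_ge m i with hi | hi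
  · simp [coeff_eq_zero_of_natDegree_lt (hf.trans_lt hi)]
  let V : Matrix (Fin (m + 1)) (Fin (m + 1)) ℤ := Matrix.vandermonde fun r => (r : ℤ)
  let v : Fin (m + 1) → ℤ := fun j => f.coeff j
  have hvalues (r : Fin (m + 1)) : N ∣ V.mulVec v r := by
    have heval : V.mulVec v r = f.eval (r : ℤ) := by
      rw [eval_eq_sum_range' (Nat.lt_succ_of_le hf), Finset.sum_range]
      simp only [Matrix.mulVec, dotProduct, V, v, Matrix.vandermonde_apply, mul_comm]
    exact heval ▸ hN _
  have hadj : V.adjugate.mulVec (V.mulVec v) = V.det • v := by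
    rw [Matrix.mulVec_mulVec, Matrix.adjugate_mul, Matrix.smul_mulVec, Matrix.one_mulVec]
  have hdet : V.det = m.superFactorial := by
    exact_mod_cast Matrix.det_vandermonde_id_eq_superFactorial (R := ℤ) m
  have hdvd : N ∣ V.adjugate.mulVec (V.mulVec v) ⟨i, Nat.lt_succ_of_le hi⟩ := by
    rw [Matrix.mulVec, dotProduct]
    exact Finset.dvd_sum fun r _ => (hvalues r).mul_left _
  rwa [hadj, hdet] at hdvd

theorem superFactorial_pos (n : ℕ) : 0 < n.superFactorial := by
  induction n with
  | zero => exact one_pos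
  | succ n ih => exact mul_pos n.succ.factorial_pos ih

theorem dvd_superFactorial_mul_cont {k N : ℕ} {f : ℤ[X]} (hf : f.natDegree ≤ k)
    (hN : ∀ n : ℤ, (N : ℤ) ∣ f.derivative.eval n) : N ∣ k.superFactorial * cont f := by
  rcases k with _ | k
  · simp [cont, Nat.le_zero.1 hf]
  have hsf : cont (C (k.succ.superFactorial : ℤ) * f) = k.succ.superFactorial * cont f := by
    rw [cont_C_mul (Nat.cast_ne_zero.2 (superFactorial_pos _).ne'), Int.natAbs_natCast]
  rw [← hsf, dvd_cont_iff]
  rintro (_ | i) hi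
  · simp at hi
  rw [coeff_C_mul]
  rcases lt_or_ge k i with hik | hik
  · rw [coeff_eq_zero_of_natDegree_lt (by lia), mul_zero]
    exact dvd_zero _
  have hderiv : f.derivative.natDegree ≤ k := (natDegree_derivative_le f).trans (by lia)
  obtain ⟨m, hm⟩ : i + 1 ∣ k.succ.factorial := Nat.dvd_factorial i.succ_pos (by lia)
  have hdvd := (dvd_superFactorial_mul_coeff hderiv hN i).mul_left (m : ℤ)
  rw [coeff_derivative] at hdvd
  rw [Nat.superFactorial_succ, hm]
  refine hdvd.trans (dvd_of_eq ?_)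
  push_cast
  ring

theorem le_superFactorial_mul_gcd {k N q : ℕ} {f : ℤ[X]} (hdeg : f.natDegree ≤ k)
    (hN : ∀ n : ℤ, (N : ℤ) ∣ f.derivative.eval n) (hq : 0 < q) (hNq : N ∣ q) :
    N ≤ k.superFactorial * (cont f).gcd q := by
  refine Nat.le_of_dvd (mul_pos (superFactorial_pos k) (Nat.gcd_pos_of_pos_right _ hq)) ?_
  rw [← Nat.gcd_mul_left]
  exact Nat.dvd_gcd (dvd_superFactorial_mul_cont hdeg hN) (hNq.mul_left _)

end Content

section ReductionModP

/-- The reduction of an integer polynomial modulo `p`. -/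
noncomputable abbrev reduceMod (p : ℕ) (f : ℤ[X]) : (ZMod p)[X] :=
  f.map (Int.castRingHom (ZMod p))

variable {p : ℕ} {f : ℤ[X]}

theorem coeff_reduceMod_eq_zero_iff {i : ℕ} :
    (reduceMod p f).coeff i = 0 ↔ (p : ℤ) ∣ f.coeff i := by
  rw [coeff_map, eq_intCast, ZMod.intCast_zmod_eq_zero_iff_dvd]

theorem eval_reduceMod (n : ℤ) : (reduceMod p f).eval (n : ZMod p) = (f.eval n : ℤ) :=
  eval_intCast_map _ _ _

theorem isRoot_reduceMod_iff {n : ℤ} :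
    (reduceMod p f).IsRoot (n : ZMod p) ↔ (p : ℤ) ∣ f.eval n := by
  rw [IsRoot, eval_reduceMod, ZMod.intCast_zmod_eq_zero_iff_dvd]

theorem natDegree_reduceMod_eq_zero_iff : (reduceMod p f).natDegree = 0 ↔ p ∣ cont f := by
  rw [← Nat.le_zero, natDegree_le_iff_coeff_eq_zero, dvd_cont_iff]
  exact forall₂_congr fun i _ => coeff_reduceMod_eq_zero_iff

theorem reduceMod_taylor (n : ℤ) :
    reduceMod p (taylor n f) = taylor (n : ZMod p) (reduceMod p f) := by
  simp [reduceMod, taylor_apply, Polynomial.map_comp]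

/-- A factorisation `f' = p ^ t F` of the derivative with `F` nonzero modulo `p`. -/
structure IsReducedDerivative (p t : ℕ) (f F : ℤ[X]) : Prop where
  derivative_eq : f.derivative = C ((p : ℤ) ^ t) * F
  reduceMod_ne_zero : reduceMod p F ≠ 0

theorem exists_isReducedDerivative [hp : Fact p.Prime] (hf : f.derivative ≠ 0) :
    ∃ t F, IsReducedDerivative p t f F := by
  have hp' : Prime (C (p : ℤ)) := prime_C_iff.2 (Nat.prime_iff_prime_int.1 hp.out)
  obtain ⟨F, hF, hndvd⟩ :=
    (FiniteMultiplicity.of_prime_left hp' hf).exists_eq_pow_mul_and_not_dvd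
  refine ⟨_, F, by rw [C_pow]; exact hF, fun h0 => hndvd ?_⟩
  rw [C_dvd_iff_dvd_coeff]
  exact fun i => coeff_reduceMod_eq_zero_iff.1 (by rw [h0, coeff_zero])

theorem IsReducedDerivative.natDegree_le {t : ℕ} {F : ℤ[X]} [hp : Fact p.Prime]
    (h : IsReducedDerivative p t f F) : F.natDegree ≤ f.natDegree := by
  have hp0 : (p : ℤ) ^ t ≠ 0 := pow_ne_zero t (Nat.cast_ne_zero.2 hp.out.ne_zero)
  rw [← natDegree_C_mul hp0, ← h.derivative_eq]
  exact (natDegree_derivative_le f).trans (Nat.sub_le _ _)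

theorem IsReducedDerivative.pow_le_natDegree {t : ℕ} {F : ℤ[X]} [hp : Fact p.Prime]
    (h : IsReducedDerivative p t f F) (hf : ¬p ∣ cont f) : p ^ t ≤ f.natDegree := by
  obtain ⟨i, hi, hideg, hndvd⟩ := exists_not_dvd_coeff_of_not_dvd_cont hf
  obtain ⟨i, rfl⟩ := Nat.exists_eq_add_of_le' hi
  have hcoeff : (p : ℤ) ^ t ∣ f.coeff (i + 1) * (i + 1) := by
    rw [← coeff_derivative, h.derivative_eq, coeff_C_mul]
    exact dvd_mul_right _ _
  have hdvd : (p : ℤ) ^ t ∣ (i + 1 : ℤ) :=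
    (Nat.prime_iff_prime_int.1 hp.out).pow_dvd_of_dvd_mul_left t hndvd hcoeff
  exact (Nat.le_of_dvd i.succ_pos (by exact_mod_cast hdvd)).trans hideg

theorem sum_rootMultiplicity_reduceMod [Fact p.Prime] (f : ℤ[X]) :
    ∑ s ∈ Finset.range p, (reduceMod p f).rootMultiplicity (s : ZMod p) =
      (reduceMod p f).roots.card := by
  rw [sum_range_natCast_zmod p fun x => (reduceMod p f).rootMultiplicity x,
    ← Multiset.sum_count_eq_card fun x _ => Finset.mem_univ x]
  simp only [count_roots]

theorem card_filter_dvd_eval_le [Fact p.Prime] (hf : reduceMod p f ≠ 0) :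
    (Finset.range p |>.filter fun s : ℕ => (p : ℤ) ∣ f.eval (s : ℤ)).card ≤ f.natDegree := by
  calc (Finset.range p |>.filter fun s : ℕ => (p : ℤ) ∣ f.eval (s : ℤ)).card
      ≤ ∑ s ∈ Finset.range p, (reduceMod p f).rootMultiplicity (s : ZMod p) := by
        rw [Finset.card_filter]
        refine Finset.sum_le_sum fun s _ => ?_
        split_ifs with hs
        · rw [← isRoot_reduceMod_iff, Int.cast_natCast] at hs
          exact (rootMultiplicity_pos hf).2 hs
        · exact Nat.zero_le _
    _ = (reduceMod p f).roots.card := sum_rootMultiplicity_reduceMod f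
    _ ≤ f.natDegree := (card_roots' _).trans natDegree_map_le

theorem norm_expSum_prime_le [Fact p.Prime] (hf : ¬p ∣ cont f) (hdeg : f.natDegree < p) :
    ‖expSum p f‖ ≤ (f.natDegree - 1) * √p := by
  have hdeg_pos : 0 < (reduceMod p f).natDegree :=
    Nat.pos_of_ne_zero (mt natDegree_reduceMod_eq_zero_iff.1 hf)
  have hdeg_le : (reduceMod p f).natDegree ≤ f.natDegree := natDegree_map_le
  have hcoprime : (Fintype.card (ZMod p)).Coprime (reduceMod p f).natDegree := by
    rw [ZMod.card]
    exact Nat.coprime_of_lt_prime hdeg_pos.ne' (hdeg_le.trans_lt hdeg) Fact.out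
  have hsum : expSum p f = ∑ x : ZMod p, ZMod.stdAddChar ((reduceMod p f).eval x) := by
    rw [← sum_range_natCast_zmod p fun x => ZMod.stdAddChar ((reduceMod p f).eval x), expSum]
    refine Finset.sum_congr rfl fun s _ => ?_
    rw [← Int.cast_natCast (R := ZMod p), eval_reduceMod, ZMod.stdAddChar_coe, eMod_eq_exp]
  have hψ : (ZMod.stdAddChar : AddChar (ZMod p) ℂ) ≠ 1 := by
    simpa only [AddChar.mulShift_one] using ZMod.isPrimitive_stdAddChar p one_ne_zero
  rw [hsum]
  refine (norm_sum_addChar_eval_le hdeg_pos hcoprime hψ).trans ?_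
  rw [ZMod.card]
  gcongr

end ReductionModP

section LocalExpansion

theorem le_of_prime_pow_mul_eq {M : Type*} [CommMonoidWithZero M] [IsCancelMulZero M] {π x y : M}
    (hπ : Prime π) (hy : ¬π ∣ y) {a b : ℕ} (h : π ^ a * x = π ^ b * y) : a ≤ b :=
  (pow_dvd_pow_iff hπ.ne_zero hπ.not_isUnit).1
    (hπ.pow_dvd_of_dvd_mul_right a hy (h ▸ dvd_mul_right _ _))

theorem dvd_of_pow_mul_eq_of_lt {M : Type*} [CommMonoidWithZero M] [IsCancelMulZero M] {π x y : M}
    (hπ : π ≠ 0) {a b : ℕ} (hab : a < b) (h : π ^ a * x = π ^ b * y) : π ∣ x := by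
  obtain ⟨c, rfl⟩ := Nat.exists_eq_add_of_lt hab
  refine ⟨π ^ c * y, mul_left_cancel₀ (pow_ne_zero a hπ) ?_⟩
  rw [h, pow_succ, pow_add]
  ac_rfl

/-- The polynomial `f(ν + p X)`, which describes `f` on the residue class of `ν` modulo `p`. -/
noncomputable def localPoly (p : ℕ) (ν : ℤ) (f : ℤ[X]) : ℤ[X] :=
  (taylor ν f).comp (C (p : ℤ) * X)

variable {p : ℕ} {ν : ℤ} {f : ℤ[X]}

theorem eval_localPoly (z : ℤ) : (localPoly p ν f).eval z = f.eval (ν + p * z) := by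
  rw [localPoly, eval_comp, taylor_eval, eval_mul, eval_C, eval_X, add_comm]

theorem coeff_localPoly (i : ℕ) : (localPoly p ν f).coeff i = (taylor ν f).coeff i * (p : ℤ) ^ i :=
  comp_C_mul_X_coeff

theorem natDegree_localPoly_le : (localPoly p ν f).natDegree ≤ f.natDegree := by
  rw [natDegree_le_iff_coeff_eq_zero]
  intro i hi
  rw [coeff_localPoly, coeff_eq_zero_of_natDegree_lt (by rwa [natDegree_taylor]), zero_mul]

theorem derivative_localPoly :
    (localPoly p ν f).derivative = C (p : ℤ) * localPoly p ν f.derivative := by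
  simp [localPoly, derivative_comp, taylor_apply]

theorem localPoly_C_mul (c : ℤ) : localPoly p ν (C c * f) = C c * localPoly p ν f := by
  rw [localPoly, localPoly, taylor_mul, taylor_C, mul_comp, C_comp]

theorem dvd_cont_taylor_iff : p ∣ cont (taylor ν f) ↔ p ∣ cont f := by
  rw [← natDegree_reduceMod_eq_zero_iff, reduceMod_taylor, natDegree_taylor,
    natDegree_reduceMod_eq_zero_iff]

theorem exists_localPoly_eq [hp : Fact p.Prime] (hf : ¬p ∣ cont f) (ν : ℤ) :
    ∃ (σ : ℕ) (h : ℤ[X]), localPoly p ν f = C (f.eval ν) + C ((p : ℤ) ^ (σ + 1)) * h ∧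
      ¬p ∣ cont h ∧ σ + 1 ≤ f.natDegree ∧ h.natDegree ≤ f.natDegree := by
  obtain ⟨i, hi, hideg, hndvd⟩ :=
    exists_not_dvd_coeff_of_not_dvd_cont (mt dvd_cont_taylor_iff.1 hf : ¬p ∣ cont (taylor ν f))
  rw [natDegree_taylor] at hideg
  have hp0 : (p : ℤ) ≠ 0 := Nat.cast_ne_zero.2 hp.out.ne_zero
  have hcont : cont (localPoly p ν f) ≠ 0 := by
    intro h0
    have hzero := dvd_cont_iff.1 (dvd_refl (cont (localPoly p ν f))) i hi
    rw [h0, Nat.cast_zero, zero_dvd_iff, coeff_localPoly, mul_eq_zero] at hzero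
    exact hndvd (hzero.resolve_right (pow_ne_zero i hp0) ▸ dvd_zero _)
  obtain ⟨σ, h, heq, hh⟩ := exists_eq_C_add_C_pow_mul hp.out hcont
  have hcoeff (n : ℕ) (hn : 1 ≤ n) :
      (p : ℤ) ^ σ * h.coeff n = (p : ℤ) ^ n * (taylor ν f).coeff n := by
    rw [mul_comm _ ((taylor ν f).coeff n), ← coeff_localPoly, heq, coeff_add,
      coeff_C_of_ne_zero (by lia), coeff_C_mul, zero_add]
  have hσ : 0 < σ := by
    refine Nat.pos_of_ne_zero fun h0 => hh (dvd_cont_iff.2 fun n hn => ?_)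
    exact dvd_of_pow_mul_eq_of_lt hp0 (by lia) (hcoeff n hn)
  have hσi : σ ≤ i := le_of_prime_pow_mul_eq (Nat.prime_iff_prime_int.1 hp.out) hndvd (hcoeff i hi)
  have hdeg : h.natDegree ≤ f.natDegree := by
    rw [← natDegree_C_mul (pow_ne_zero σ hp0), ← natDegree_C_add, ← heq]
    exact natDegree_localPoly_le
  rw [coeff_localPoly, taylor_coeff_zero, pow_zero, mul_one] at heq
  obtain ⟨σ, rfl⟩ := Nat.exists_eq_add_of_lt hσ
  rw [zero_add] at heq hσi
  exact ⟨σ, h, heq, hh, hσi.trans hideg, hdeg⟩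

theorem coeff_taylor_rootMultiplicity_ne_zero {R : Type*} [CommRing R] {g : R[X]} (hg : g ≠ 0)
    (a : R) : (taylor a g).coeff (g.rootMultiplicity a) ≠ 0 := by
  rw [rootMultiplicity_eq_natTrailingDegree, ← taylor_apply, Ne, coeff_natTrailingDegree_eq_zero,
    taylor_eq_zero]
  exact hg

theorem natDegree_reduceMod_le_rootMultiplicity [hp : Fact p.Prime] {a b : ℕ} {F H : ℤ[X]}
    (hF : reduceMod p F ≠ 0) (h : C ((p : ℤ) ^ a) * H = C ((p : ℤ) ^ b) * localPoly p ν F) :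
    (reduceMod p H).natDegree ≤ (reduceMod p F).rootMultiplicity (ν : ZMod p) := by
  set m := (reduceMod p F).rootMultiplicity (ν : ZMod p)
  have hcoeff (i : ℕ) : (p : ℤ) ^ a * H.coeff i = (p : ℤ) ^ (b + i) * (taylor ν F).coeff i := by
    rw [← coeff_C_mul, h, coeff_C_mul, coeff_localPoly, pow_add]
    ring
  have hndvd : ¬(p : ℤ) ∣ (taylor ν F).coeff m := by
    rw [← coeff_reduceMod_eq_zero_iff, reduceMod_taylor]
    exact coeff_taylor_rootMultiplicity_ne_zero hF _
  have ha : a ≤ b + m := le_of_prime_pow_mul_eq (Nat.prime_iff_prime_int.1 hp.out) hndvd (hcoeff m)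
  rw [natDegree_le_iff_coeff_eq_zero]
  intro i hi
  rw [coeff_reduceMod_eq_zero_iff]
  exact dvd_of_pow_mul_eq_of_lt (Nat.cast_ne_zero.2 hp.out.ne_zero) (by lia) (hcoeff i)

end LocalExpansion

section HuaBound

/-- `P` is large enough to absorb the number of residues lost when `p ^ (σ + 1)` is split off an
exponential sum, for all `σ < k`. The choice `P = p ^ (1 - 1 / k)` is the smallest possible one. -/
def DominatesPowers (k p : ℕ) (P : ℝ) : Prop :=
  ∀ σ < k, (p : ℝ) ^ σ ≤ P ^ (σ + 1)

theorem DominatesPowers.one_le {k p : ℕ} {P : ℝ} (hP : DominatesPowers k p P) (hk : 1 ≤ k) :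
    1 ≤ P := by
  simpa using hP 0 hk

theorem DominatesPowers.sqrt_le {k p : ℕ} {P : ℝ} (hP : DominatesPowers k p P) (hk : 2 ≤ k) :
    √p ≤ P :=
  Real.sqrt_le_iff.2
    ⟨zero_le_one.trans (hP.one_le (one_le_two.trans hk)), by simpa using hP 1 hk⟩

theorem dominatesPowers_rpow {k p : ℕ} (hp : 1 ≤ p) :
    DominatesPowers k p ((p : ℝ) ^ (1 - 1 / k : ℝ)) := by
  intro σ hσ
  have hk : (0 : ℝ) < k := mod_cast Nat.zero_lt_of_lt hσ
  have hσk : ((σ + 1 : ℕ) : ℝ) ≤ k := mod_cast hσ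
  rw [← Real.rpow_natCast, ← Real.rpow_natCast, ← Real.rpow_mul p.cast_nonneg]
  refine Real.rpow_le_rpow_of_exponent_le (mod_cast hp) ?_
  have hfrac : ((σ + 1 : ℕ) : ℝ) / k ≤ 1 := (div_le_one hk).2 hσk
  calc (σ : ℝ) = (σ + 1 : ℕ) - 1 := by push_cast; ring
    _ ≤ (σ + 1 : ℕ) - (σ + 1 : ℕ) / k := by gcongr
    _ = (1 - 1 / k) * (σ + 1 : ℕ) := by ring

variable {p : ℕ} [hp : Fact p.Prime] {k t : ℕ} {P : ℝ} {f F : ℤ[X]}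

theorem IsReducedDerivative.expSum_eq_sum (h : IsReducedDerivative p t f F) {n : ℕ}
    (hn : 2 * t + 1 ≤ n) :
    expSum (p ^ (n + 1)) f =
      ∑ ν ∈ Finset.range p with (p : ℤ) ∣ F.eval ((ν : ℕ) : ℤ),
        ∑ z ∈ Finset.range (p ^ n), eMod (p ^ (n + 1)) ((localPoly p ν f).eval (z : ℤ)) := by
  have hderiv (s : ℤ) : f.derivative.eval s = (p : ℤ) ^ t * F.eval s := by
    rw [h.derivative_eq, eval_mul, eval_C]
  have hpt : (p : ℤ) ^ t ≠ 0 := pow_ne_zero t (Nat.cast_ne_zero.2 hp.out.ne_zero)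
  have hvanish : ∑ s ∈ Finset.range (p ^ (n + 1)) with ¬(p : ℤ) ∣ F.eval ((s : ℕ) : ℤ),
      eMod (p ^ (n + 1)) (f.eval (s : ℤ)) = 0 := by
    obtain ⟨m, rfl⟩ := Nat.exists_eq_add_of_le hn
    have hexp : 2 * t + 1 + m + 1 = (t + 1 + m) + t + 1 := by ring
    rw [hexp]
    refine sum_filter_eMod_eval_eq_zero hp.out.ne_zero (Nat.le_add_right (t + 1) m)
      (S := fun s => ¬(p : ℤ) ∣ F.eval s)
      (fun s z => not_congr (dvd_eval_iff_of_dvd_sub F ⟨p ^ (t + m) * z, by ring⟩))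
      (fun s _ => ⟨_, hderiv s⟩) fun s hs => ?_
    rwa [hderiv, pow_succ, mul_dvd_mul_iff_left hpt]
  have hclass (ν z : ℕ) : (p : ℤ) ∣ F.eval ((ν + p * z : ℕ) : ℤ) ↔ (p : ℤ) ∣ F.eval (ν : ℤ) :=
    dvd_eval_iff_of_dvd_sub F ⟨z, by push_cast; ring⟩
  rw [expSum, ← Finset.sum_filter_add_sum_filter_not _ fun s : ℕ => (p : ℤ) ∣ F.eval (s : ℤ),
    hvanish, add_zero, Finset.sum_filter, Finset.sum_filter, pow_succ' p n,
    sum_range_mul_eq_sum_sum]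
  refine Finset.sum_congr rfl fun ν _ => ?_
  simp only [hclass, eval_localPoly]
  split_ifs <;> simp

theorem IsReducedDerivative.norm_expSum_le_of_le (h : IsReducedDerivative p t f F)
    (hk : 2 ≤ k) (hP : DominatesPowers k p P) (hdeg : f.natDegree ≤ k)
    (hf : ¬p ∣ cont f) {j : ℕ} (hj : j ≤ 2 * t + 1) :
    ‖expSum (p ^ j) f‖ ≤ k ^ 3 * P ^ j := by
  have hP1 := hP.one_le (one_le_two.trans hk)
  have hpt : p ^ t ≤ k := (h.pow_le_natDegree hf).trans hdeg
  rcases le_or_gt p k with hpk | hpk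
  · calc ‖expSum (p ^ j) f‖ ≤ (p ^ j : ℕ) := norm_expSum_le _ _
      _ ≤ (k ^ 3 : ℕ) := by
        refine Nat.cast_le.2 ?_
        calc p ^ j ≤ p ^ (2 * t + 1) := Nat.pow_le_pow_right hp.out.pos hj
          _ = (p ^ t) ^ 2 * p := by ring
          _ ≤ k ^ 2 * k := by gcongr
      _ ≤ k ^ 3 * P ^ j := by
        push_cast
        exact le_mul_of_one_le_right (by positivity) (one_le_pow₀ hP1)
  have ht : t = 0 := by
    by_contra ht
    exact (hpk.trans_le (Nat.le_self_pow ht p)).not_ge hpt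
  have hk3 : (k : ℝ) ≤ k ^ 3 := mod_cast Nat.le_self_pow three_ne_zero k
  have hk1 : (1 : ℝ) ≤ k := mod_cast one_le_two.trans hk
  obtain rfl | rfl : j = 0 ∨ j = 1 := by lia
  · calc ‖expSum (p ^ 0) f‖ ≤ (p ^ 0 : ℕ) := norm_expSum_le _ _
      _ ≤ k ^ 3 * P ^ 0 := by simpa using hk1.trans hk3
  · calc ‖expSum (p ^ 1) f‖ ≤ (f.natDegree - 1) * √p := by
          rw [pow_one]
          exact norm_expSum_prime_le hf (hdeg.trans_lt hpk)
      _ ≤ k * P := by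
        gcongr
        · exact (sub_le_self _ zero_le_one).trans (mod_cast hdeg)
        · exact hP.sqrt_le hk
      _ ≤ k ^ 3 * P ^ 1 := by rw [pow_one]; gcongr

/-- Hua's bound for a single modulus `p ^ j`, uniform over polynomials of degree at most `k`; the
number of roots of the reduced derivative enters so that the bound is additive over residue
classes. -/
def HuaBoundAt (k p : ℕ) [Fact p.Prime] (P : ℝ) (j : ℕ) : Prop :=
  ∀ (f F : ℤ[X]) (t : ℕ), f.natDegree ≤ k → ¬p ∣ cont f → IsReducedDerivative p t f F →
    ‖expSum (p ^ j) f‖ ≤ k ^ 3 * (max 1 (reduceMod p F).roots.card : ℕ) * P ^ j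

theorem IsReducedDerivative.card_roots_le_rootMultiplicity {t' σ : ℕ} {g G : ℤ[X]} {a ν : ℤ}
    (h : IsReducedDerivative p t f F) (hG : IsReducedDerivative p t' g G)
    (heq : localPoly p ν f = C a + C ((p : ℤ) ^ σ) * g) :
    (reduceMod p G).roots.card ≤ (reduceMod p F).rootMultiplicity (ν : ZMod p) := by
  have hderiv := congrArg derivative heq
  rw [derivative_localPoly, derivative_add, derivative_C, zero_add, derivative_C_mul,
    h.derivative_eq, hG.derivative_eq, localPoly_C_mul, ← mul_assoc, ← mul_assoc, ← C_mul, ← C_mul,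
    ← pow_succ', ← pow_add] at hderiv
  exact (card_roots' _).trans
    (natDegree_reduceMod_le_rootMultiplicity h.reduceMod_ne_zero hderiv.symm)

theorem IsReducedDerivative.norm_sum_localPoly_le (h : IsReducedDerivative p t f F)
    (hk : 2 ≤ k) (hP : DominatesPowers k p P) (hdeg : f.natDegree ≤ k)
    (hf : ¬p ∣ cont f) {n : ℕ} (ih : ∀ j ≤ n, HuaBoundAt k p P j) {ν : ℤ}
    (hν : (p : ℤ) ∣ F.eval ν) :
    ‖∑ z ∈ Finset.range (p ^ n), eMod (p ^ (n + 1)) ((localPoly p ν f).eval (z : ℤ))‖ ≤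
      k ^ 3 * (reduceMod p F).rootMultiplicity (ν : ZMod p) * P ^ (n + 1) := by
  have hP1 := hP.one_le (one_le_two.trans hk)
  set μ := (reduceMod p F).rootMultiplicity (ν : ZMod p)
  have hμ : 1 ≤ μ := (rootMultiplicity_pos h.reduceMod_ne_zero).2 (isRoot_reduceMod_iff.2 hν)
  obtain ⟨σ, g, heq, hg, hσ, hgdeg⟩ := exists_localPoly_eq hf ν
  rcases le_or_gt n σ with hn | hn
  · calc _ ≤ ((p ^ n : ℕ) : ℝ) := by
          simpa using norm_sum_eMod_le (Finset.range (p ^ n)) (p ^ (n + 1))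
            fun z => (localPoly p ν f).eval (z : ℤ)
      _ ≤ P ^ (n + 1) := by
          push_cast
          exact hP n (by lia)
      _ ≤ k ^ 3 * μ * P ^ (n + 1) := by
          refine le_mul_of_one_le_left (by positivity) ?_
          exact_mod_cast Nat.mul_pos (pow_pos (by lia) 3) hμ
  obtain ⟨m, rfl⟩ := Nat.exists_eq_add_of_le hn.le
  obtain ⟨t', G, hG⟩ := exists_isReducedDerivative (p := p)
    (derivative_ne_zero_of_cont_ne_zero fun h0 => hg (h0 ▸ dvd_zero p))
  have hroots : (reduceMod p G).roots.card ≤ μ := h.card_roots_le_rootMultiplicity hG heq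
  have hnorm : ‖∑ z ∈ Finset.range (p ^ (σ + m)),
      eMod (p ^ (σ + m + 1)) ((localPoly p ν f).eval (z : ℤ))‖ =
        (p : ℝ) ^ σ * ‖expSum (p ^ m) g‖ := by
    rw [add_right_comm σ m 1, pow_add p (σ + 1), pow_add p σ, mul_comm (p ^ σ), heq]
    simpa using
      norm_sum_eMod_add_mul_eval (pow_ne_zero (σ + 1) hp.out.ne_zero) (p ^ m) (p ^ σ) (f.eval ν) g
  calc _ = (p : ℝ) ^ σ * ‖expSum (p ^ m) g‖ := hnorm
    _ ≤ P ^ (σ + 1) * (k ^ 3 * μ * P ^ m) := by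
      gcongr
      · exact hP σ (by lia)
      · refine (ih m (by lia) g G t' (hgdeg.trans hdeg) hg hG).trans ?_
        gcongr
        exact max_le hμ hroots
    _ = k ^ 3 * μ * P ^ (σ + m + 1) := by ring

theorem huaBoundAt (hk : 2 ≤ k) (hP : DominatesPowers k p P) (j : ℕ) :
    HuaBoundAt k p P j := by
  have hP1 := hP.one_le (one_le_two.trans hk)
  induction j using Nat.strong_induction_on with | _ j ih
  intro f F t hdeg hf h
  rcases le_or_gt j (2 * t + 1) with hj | hj
  · refine (h.norm_expSum_le_of_le hk hP hdeg hf hj).trans ?_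
    gcongr
    refine le_mul_of_one_le_right (by positivity) ?_
    exact_mod_cast le_max_left _ _
  obtain ⟨n, rfl⟩ := Nat.exists_eq_add_one_of_ne_zero (Nat.ne_zero_of_lt hj)
  calc ‖expSum (p ^ (n + 1)) f‖
      ≤ ∑ ν ∈ Finset.range p with (p : ℤ) ∣ F.eval ((ν : ℕ) : ℤ),
          k ^ 3 * (reduceMod p F).rootMultiplicity (ν : ZMod p) * P ^ (n + 1) := by
        rw [h.expSum_eq_sum (by lia)]
        refine norm_sum_le_of_le _ fun ν hν => ?_
        exact_mod_cast h.norm_sum_localPoly_le hk hP hdeg hf (fun j hj => ih j (by lia))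
          (Finset.mem_filter.1 hν).2
    _ ≤ ∑ ν ∈ Finset.range p,
          k ^ 3 * ((reduceMod p F).rootMultiplicity (ν : ZMod p) : ℝ) * P ^ (n + 1) :=
        Finset.sum_le_sum_of_subset_of_nonneg (Finset.filter_subset _ _) fun _ _ _ => by positivity
    _ = k ^ 3 * ((reduceMod p F).roots.card : ℕ) * P ^ (n + 1) := by
        rw [← Finset.sum_mul, ← Finset.mul_sum, ← sum_rootMultiplicity_reduceMod, Nat.cast_sum]
    _ ≤ k ^ 3 * (max 1 (reduceMod p F).roots.card : ℕ) * P ^ (n + 1) := by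
        gcongr
        exact le_max_right _ _

theorem norm_expSum_prime_pow_le_of_not_dvd_cont (hk : 2 ≤ k) (hP : DominatesPowers k p P)
    (hdeg : f.natDegree ≤ k) (hf : ¬p ∣ cont f) (j : ℕ) : ‖expSum (p ^ j) f‖ ≤ k ^ 4 * P ^ j := by
  have hP1 := hP.one_le (one_le_two.trans hk)
  obtain ⟨t, F, h⟩ := exists_isReducedDerivative (p := p)
    (derivative_ne_zero_of_cont_ne_zero fun h0 => hf (h0 ▸ dvd_zero p))
  have hroots : (reduceMod p F).roots.card ≤ k :=
    (card_roots' _).trans (natDegree_map_le.trans (h.natDegree_le.trans hdeg))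
  calc ‖expSum (p ^ j) f‖ ≤ k ^ 3 * (max 1 (reduceMod p F).roots.card : ℕ) * P ^ j :=
        huaBoundAt hk hP j f F t hdeg hf h
    _ ≤ k ^ 3 * k * P ^ j := by
        gcongr
        exact max_le (by lia) hroots
    _ = k ^ 4 * P ^ j := by ring

theorem norm_expSum_prime_pow_le (hk : 2 ≤ k) (hP : DominatesPowers k p P)
    (hdeg : f.natDegree ≤ k) (j : ℕ) :
    ‖expSum (p ^ j) f‖ ≤ k ^ 4 * (cont f).gcd (p ^ j) * P ^ j := by
  have hP1 := hP.one_le (one_le_two.trans hk)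
  by_cases hdvd : p ^ j ∣ cont f
  · calc ‖expSum (p ^ j) f‖ ≤ (p ^ j : ℕ) := norm_expSum_le _ _
      _ = 1 * ((cont f).gcd (p ^ j) : ℕ) * 1 := by rw [Nat.gcd_eq_right hdvd, one_mul, mul_one]
      _ ≤ k ^ 4 * (cont f).gcd (p ^ j) * P ^ j := by
        gcongr
        · exact one_le_pow₀ (mod_cast one_le_two.trans hk)
        · exact one_le_pow₀ hP1
  have hcont : cont f ≠ 0 := fun h0 => hdvd (h0 ▸ dvd_zero _)
  obtain ⟨σ, g, heq, hg⟩ := exists_eq_C_add_C_pow_mul hp.out hcont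
  have hp0 : (p : ℤ) ^ σ ≠ 0 := pow_ne_zero σ (Nat.cast_ne_zero.2 hp.out.ne_zero)
  have hσ : p ^ σ ∣ cont f := by
    rw [heq, cont_C_add, cont_C_mul hp0, Int.natAbs_pow, Int.natAbs_natCast]
    exact dvd_mul_right _ _
  have hσj : σ ≤ j := le_of_not_ge fun h => hdvd ((pow_dvd_pow p h).trans hσ)
  obtain ⟨m, rfl⟩ := Nat.exists_eq_add_of_le hσj
  have hgdeg : g.natDegree ≤ k := by
    rwa [heq, natDegree_C_add, natDegree_C_mul hp0] at hdeg
  have hgcd : p ^ σ ≤ (cont f).gcd (p ^ (σ + m)) :=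
    Nat.le_of_dvd (Nat.gcd_pos_of_pos_left _ (Nat.pos_of_ne_zero hcont))
      (Nat.dvd_gcd hσ (pow_dvd_pow p hσj))
  have hnorm : ‖expSum (p ^ (σ + m)) f‖ = (p ^ σ : ℕ) * ‖expSum (p ^ m) g‖ := by
    rw [heq, pow_add, ← Nat.cast_pow, norm_expSum_mul_C_add_C_mul (pow_ne_zero σ hp.out.ne_zero)]
  calc ‖expSum (p ^ (σ + m)) f‖ = (p ^ σ : ℕ) * ‖expSum (p ^ m) g‖ := hnorm
    _ ≤ ((cont f).gcd (p ^ (σ + m)) : ℕ) * (k ^ 4 * P ^ (σ + m)) := by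
      gcongr
      refine (norm_expSum_prime_pow_le_of_not_dvd_cont hk hP hgdeg hg m).trans ?_
      gcongr
      exact Nat.le_add_left m σ
    _ = k ^ 4 * (cont f).gcd (p ^ (σ + m)) * P ^ (σ + m) := by ring

end HuaBound

section SievedPrimePowers

variable {p k δ j : ℕ} [hp : Fact p.Prime] {f : ℤ[X]}

theorem reduceMod_derivative_ne_zero (hf : ¬p ∣ cont f) (hdeg : f.natDegree < p) :
    reduceMod p f.derivative ≠ 0 := by
  obtain ⟨t, F, h⟩ := exists_isReducedDerivative (p := p)
    (derivative_ne_zero_of_cont_ne_zero fun h0 => hf (h0 ▸ dvd_zero p))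
  have ht : t = 0 := by
    by_contra ht
    exact (hdeg.trans_le (Nat.le_self_pow ht p)).not_ge (h.pow_le_natDegree hf)
  rw [h.derivative_eq, ht, pow_zero, C_1, one_mul]
  exact h.reduceMod_ne_zero

theorem norm_sum_filter_not_dvd_derivative_prime_le (hf : ¬p ∣ cont f) (hdeg : f.natDegree ≤ k) :
    ‖∑ s ∈ Finset.range p with ¬(p : ℤ) ∣ f.derivative.eval ((s : ℕ) : ℤ),
      eMod p (f.eval (s : ℤ))‖ ≤ 2 * k * √p := by
  have hsqrt : 1 ≤ √(p : ℝ) := Real.one_le_sqrt.2 (mod_cast hp.out.one_le)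
  rcases le_or_gt p k with hpk | hpk
  · calc _ ≤ ((Finset.range p).card : ℝ) := (norm_sum_eMod_le _ _ _).trans
          (mod_cast Finset.card_filter_le _ _)
      _ ≤ k := by simpa using hpk
      _ ≤ 2 * k * √p := by nlinarith [k.cast_nonneg (α := ℝ)]
  have hremoved : ((Finset.range p |>.filter fun s : ℕ =>
      (p : ℤ) ∣ f.derivative.eval (s : ℤ)).card : ℝ) ≤ k := by
    have := card_filter_dvd_eval_le (reduceMod_derivative_ne_zero hf (hdeg.trans_lt hpk))
    exact_mod_cast this.trans ((natDegree_derivative_le f).trans (by lia))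
  have hsplit := Finset.sum_filter_add_sum_filter_not (Finset.range p)
    (fun s : ℕ => (p : ℤ) ∣ f.derivative.eval (s : ℤ)) fun s => eMod p (f.eval (s : ℤ))
  rw [← expSum, ← eq_sub_iff_add_eq'] at hsplit
  calc _ ≤ ‖expSum p f‖ + _ := hsplit ▸ norm_sub_le _ _
    _ ≤ (f.natDegree - 1) * √p + k := by
      gcongr
      · exact norm_expSum_prime_le hf (hdeg.trans_lt hpk)
      · exact (norm_sum_eMod_le _ _ _).trans hremoved
    _ ≤ k * √p + k * √p := by
      gcongr
      · exact (sub_le_self _ zero_le_one).trans (mod_cast hdeg)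
      · exact le_mul_of_one_le_right k.cast_nonneg hsqrt
    _ = 2 * k * √p := by ring

theorem sum_filter_not_dvd_derivative_eq_zero
    (hδ : ∀ n : ℤ, (p : ℤ) ^ δ ∣ f.derivative.eval n) (hj : 2 * δ + 2 ≤ j) :
    ∑ s ∈ Finset.range (p ^ j) with ¬(p : ℤ) ^ (δ + 1) ∣ f.derivative.eval ((s : ℕ) : ℤ),
      eMod (p ^ j) (f.eval (s : ℤ)) = 0 := by
  obtain ⟨m, rfl⟩ := Nat.exists_eq_add_of_le hj
  have hexp : 2 * δ + 2 + m = (δ + 1 + m) + δ + 1 := by ring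
  rw [hexp]
  exact sum_filter_eMod_eval_eq_zero hp.out.ne_zero (Nat.le_add_right (δ + 1) m)
    (S := fun s => ¬(p : ℤ) ^ (δ + 1) ∣ f.derivative.eval s)
    (fun s z => not_congr (dvd_eval_iff_of_dvd_sub _ ⟨p ^ m * z, by ring⟩))
    (fun s _ => hδ s) fun s hs => hs

theorem pow_le_superFactorial_mul_gcd_pow (hdeg : f.natDegree ≤ k)
    (hδ : ∀ n : ℤ, (p : ℤ) ^ δ ∣ f.derivative.eval n) (hδ1 : 1 ≤ δ) (hδj : δ ≤ j)
    (hj : j ≤ 2 * δ + 1) :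
    p ^ j ≤ k.superFactorial ^ 3 * (cont f).gcd (p ^ j) ^ 3 := by
  have hpδ : p ^ δ ≤ k.superFactorial * (cont f).gcd (p ^ j) :=
    le_superFactorial_mul_gcd hdeg (mod_cast hδ) (pow_pos hp.out.pos j) (pow_dvd_pow p hδj)
  calc p ^ j ≤ p ^ (δ * 3) := Nat.pow_le_pow_right hp.out.pos (by lia)
    _ = (p ^ δ) ^ 3 := pow_mul p δ 3
    _ ≤ (k.superFactorial * (cont f).gcd (p ^ j)) ^ 3 := by gcongr
    _ = k.superFactorial ^ 3 * (cont f).gcd (p ^ j) ^ 3 := mul_pow _ _ 3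

theorem norm_sum_filter_not_dvd_derivative_le (hdeg : f.natDegree ≤ k)
    (hδ : ∀ n : ℤ, (p : ℤ) ^ δ ∣ f.derivative.eval n) (hj : δ + 1 ≤ j) :
    ‖∑ s ∈ Finset.range (p ^ j) with ¬(p : ℤ) ^ (δ + 1) ∣ f.derivative.eval ((s : ℕ) : ℤ),
      eMod (p ^ j) (f.eval (s : ℤ))‖ ≤
      (k.superFactorial ^ 3 + 2 * k) * (cont f).gcd (p ^ j) ^ 3 * √p ^ j := by
  set G := (cont f).gcd (p ^ j)
  set D := k.superFactorial
  have hsqrt : 1 ≤ √(p : ℝ) ^ j := one_le_pow₀ (Real.one_le_sqrt.2 (mod_cast hp.out.one_le))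
  have hG : 1 ≤ G := Nat.gcd_pos_of_pos_right _ (pow_pos hp.out.pos j)
  have hG3 : (1 : ℝ) ≤ G ^ 3 := one_le_pow₀ (mod_cast hG)
  have hD : 1 ≤ D := superFactorial_pos k
  have of_pow_le (h : p ^ j ≤ D ^ 3 * G ^ 3) :
      ‖∑ s ∈ Finset.range (p ^ j) with ¬(p : ℤ) ^ (δ + 1) ∣ f.derivative.eval ((s : ℕ) : ℤ),
        eMod (p ^ j) (f.eval (s : ℤ))‖ ≤ (D ^ 3 + 2 * k) * G ^ 3 * √p ^ j :=
    calc _ ≤ ((p ^ j : ℕ) : ℝ) := (norm_sum_eMod_le _ _ _).trans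
          (mod_cast (Finset.card_filter_le _ _).trans (Finset.card_range _).le)
      _ ≤ D ^ 3 * G ^ 3 := mod_cast h
      _ ≤ (D ^ 3 + 2 * k) * G ^ 3 := by gcongr; exact le_add_of_nonneg_right (by positivity)
      _ ≤ (D ^ 3 + 2 * k) * G ^ 3 * √p ^ j := le_mul_of_one_le_right (by positivity) hsqrt
  rcases le_or_gt (2 * δ + 2) j with hlarge | hsmall
  · rw [sum_filter_not_dvd_derivative_eq_zero hδ hlarge, norm_zero]
    positivity
  rcases Nat.eq_zero_or_pos δ with rfl | hδ1
  · obtain rfl : j = 1 := by lia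
    by_cases hf : p ∣ cont f
    · refine of_pow_le ?_
      have hG_eq : p ^ 1 = G := (Nat.gcd_eq_right (by rwa [pow_one])).symm
      rw [hG_eq]
      exact (Nat.le_self_pow three_ne_zero G).trans
        (Nat.le_mul_of_pos_left _ (pow_pos hD 3))
    · have hconst : (2 * k : ℝ) ≤ (D ^ 3 + 2 * k) * G ^ 3 :=
        (le_add_of_nonneg_left (by positivity)).trans (le_mul_of_one_le_right (by positivity) hG3)
      have hprime := norm_sum_filter_not_dvd_derivative_prime_le hf hdeg
      rw [zero_add]
      simp only [pow_one]
      exact hprime.trans (mul_le_mul_of_nonneg_right hconst (by positivity))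
  · exact of_pow_le (pow_le_superFactorial_mul_gcd_pow hdeg hδ hδ1 (by lia) (by lia))

end SievedPrimePowers

section GammaExponent

variable {g : ℤ[X]} {p c : ℕ}

theorem exists_not_forall_pow_dvd_eval (hp : p.Prime) (hg : g ≠ 0) :
    ∃ c, ¬∀ n : ℤ, (p : ℤ) ^ (c + 1) ∣ g.eval n := by
  obtain ⟨n, hn⟩ : ∃ n, g.eval n ≠ 0 := by
    by_contra! h
    exact hg (Polynomial.funext fun n => by rw [h n, eval_zero])
  obtain ⟨c, hc⟩ := FiniteMultiplicity.of_prime_left (Nat.prime_iff_prime_int.1 hp) hn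
  exact ⟨c, fun h => hc (h n)⟩

theorem gammaExp_pos (hp : p.Prime) (hg : g.derivative ≠ 0) : 0 < gammaExp g p := by
  obtain ⟨c, hc⟩ := exists_not_forall_pow_dvd_eval hp hg
  exact (Nat.sInf_mem (s := {c | 0 < c ∧ ¬∀ n : ℤ, (p : ℤ) ^ c ∣ g.derivative.eval n})
    ⟨c + 1, c.succ_pos, hc⟩).1

theorem pow_dvd_eval_derivative_of_lt_gammaExp (hc : c < gammaExp g p) (n : ℤ) :
    (p : ℤ) ^ c ∣ g.derivative.eval n := by
  rcases Nat.eq_zero_or_pos c with rfl | hpos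
  · simp
  · have := Nat.notMem_of_lt_sInf hc
    simp only [Set.mem_ofPred_eq, not_and, not_not] at this
    exact this hpos n

end GammaExponent

section SievedResidues

variable {g : ℤ[X]} {Y : ℝ} {q₁ q₂ : ℕ}

theorem mem_WqSet_prime_pow_iff {p j : ℕ} (hp : p.Prime) (hg : g.derivative ≠ 0) (n : ℤ) :
    n ∈ WqSet g Y (p ^ j) ↔ ((p : ℝ) ≤ Y → gammaExp g p ≤ j →
      ¬(p : ℤ) ^ gammaExp g p ∣ g.derivative.eval n) := by
  refine ⟨fun h hY hγ => h p hp hY (pow_dvd_pow p hγ), fun h r hr hY hdvd => ?_⟩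
  obtain rfl : r = p := (Nat.prime_dvd_prime_iff_eq hr hp).1
    (hr.dvd_of_dvd_pow ((dvd_pow_self r (gammaExp_pos hr hg).ne').trans hdvd))
  exact h hY ((Nat.pow_dvd_pow_iff_le_right hp.one_lt).1 hdvd)

theorem WqSet_mul (h : q₁.Coprime q₂) : WqSet g Y (q₁ * q₂) = WqSet g Y q₁ ∩ WqSet g Y q₂ := by
  have hdvd (p : ℕ) (hp : p.Prime) :
      p ^ gammaExp g p ∣ q₁ * q₂ ↔ p ^ gammaExp g p ∣ q₁ ∨ p ^ gammaExp g p ∣ q₂ := by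
    rcases Nat.eq_zero_or_pos (gammaExp g p) with hγ | hγ
    · simp [hγ]
    · exact h.isPrimePow_dvd_mul (hp.isPrimePow.pow hγ.ne')
  refine Set.ext fun n => ⟨fun hn => ⟨fun p hp hY hpq => ?_, fun p hp hY hpq => ?_⟩,
    fun hn p hp hY hpq => ?_⟩
  · exact hn p hp hY (hpq.mul_right q₂)
  · exact hn p hp hY (hpq.mul_left q₁)
  · exact ((hdvd p hp).1 hpq).elim (hn.1 p hp hY) (hn.2 p hp hY)

theorem mem_WqSet_iff_of_dvd_sub {q : ℕ} {m n : ℤ} (h : (q : ℤ) ∣ m - n) :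
    m ∈ WqSet g Y q ↔ n ∈ WqSet g Y q := by
  refine forall₂_congr fun p _ => forall₂_congr fun _ hpq => not_congr ?_
  have hpq' : (p : ℤ) ^ gammaExp g p ∣ q := mod_cast hpq
  exact dvd_eval_iff_of_dvd_sub _ (hpq'.trans h)

theorem sum_range_mul_of_coprime {R : Type*} [CommSemiring R] (hcop : q₁.Coprime q₂)
    (hq₁ : q₁ ≠ 0) (hq₂ : q₂ ≠ 0) {φ₁ φ₂ : ℕ → R} (hφ₁ : Function.Periodic φ₁ q₁)
    (hφ₂ : Function.Periodic φ₂ q₂) :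
    ∑ s ∈ Finset.range (q₁ * q₂), φ₁ s * φ₂ s =
      (∑ s ∈ Finset.range q₁, φ₁ s) * ∑ s ∈ Finset.range q₂, φ₂ s := by
  rw [Finset.sum_mul_sum, ← Finset.sum_product']
  refine Finset.sum_nbij' (fun s => (s % q₁, s % q₂))
    (fun x => (Nat.chineseRemainder hcop x.1 x.2 : ℕ)) ?_ ?_ ?_ ?_ ?_
  · intro s _
    simp [Nat.mod_lt, Nat.pos_of_ne_zero hq₁, Nat.pos_of_ne_zero hq₂]
  · intro x _
    exact Finset.mem_range.2 (Nat.chineseRemainder_lt_mul hcop _ _ hq₁ hq₂)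
  · intro s hs
    have hmod := Nat.chineseRemainder_modEq_unique hcop (a := s % q₁) (b := s % q₂)
      (Nat.mod_modEq s q₁).symm (Nat.mod_modEq s q₂).symm
    exact (hmod.eq_of_lt_of_lt (Finset.mem_range.1 hs)
      (Nat.chineseRemainder_lt_mul hcop _ _ hq₁ hq₂)).symm
  · rintro ⟨r₁, r₂⟩ hr
    obtain ⟨h₁, h₂⟩ := (Nat.chineseRemainder hcop r₁ r₂).2
    simp only [Finset.mem_product, Finset.mem_range] at hr
    exact Prod.ext (Nat.mod_eq_of_modEq h₁ hr.1) (Nat.mod_eq_of_modEq h₂ hr.2)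
  · intro s _
    simp only [hφ₁.map_mod_nat, hφ₂.map_mod_nat]

theorem eMod_mul_of_add_eq_one (hq₁ : q₁ ≠ 0) (hq₂ : q₂ ≠ 0) {u v : ℤ} (h : u * q₁ + v * q₂ = 1)
    (n : ℤ) : eMod (q₁ * q₂) n = eMod q₁ (v * n) * eMod q₂ (u * n) := by
  rw [← eMod_mul_mul hq₁ q₂, ← eMod_mul_mul hq₂ q₁, mul_comm q₂ q₁, ← eMod_add]
  congr 1
  linear_combination -n * h

open scoped Classical in
/-- The sieved complete sum `∑ e(a g(s) / q)` over the residues `s` modulo `q` in `W_q(g;Y)`.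
The numerator `a` is an integer so that the factorisation over coprime moduli stays within this
family of sums. -/
noncomputable def sievedSum (g : ℤ[X]) (Y : ℝ) (q : ℕ) (a : ℤ) : ℂ :=
  ∑ s ∈ Finset.range q with ((s : ℕ) : ℤ) ∈ WqSet g Y q, eMod q (a * g.eval (s : ℤ))

open scoped Classical in
theorem norm_sievedSum_le_self (g : ℤ[X]) (Y : ℝ) (q : ℕ) (a : ℤ) : ‖sievedSum g Y q a‖ ≤ q :=
  (norm_sum_eMod_le _ _ _).trans
    (mod_cast (Finset.card_filter_le _ _).trans_eq (Finset.card_range q))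

open scoped Classical in
theorem sievedSum_mul (hcop : q₁.Coprime q₂) (hq₁ : q₁ ≠ 0) (hq₂ : q₂ ≠ 0) {u v : ℤ}
    (huv : u * q₁ + v * q₂ = 1) (a : ℤ) :
    sievedSum g Y (q₁ * q₂) a = sievedSum g Y q₁ (v * a) * sievedSum g Y q₂ (u * a) := by
  have hper (q : ℕ) (b : ℤ) : Function.Periodic (fun s : ℕ => if (s : ℤ) ∈ WqSet g Y q
      then eMod q (b * g.eval (s : ℤ)) else 0) q := by
    intro s
    have hdvd : (q : ℤ) ∣ ((s + q : ℕ) : ℤ) - s := ⟨1, by push_cast; ring⟩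
    have heval : (q : ℤ) ∣ b * g.eval ((s + q : ℕ) : ℤ) - b * g.eval (s : ℤ) := by
      rw [← mul_sub]
      exact (hdvd.trans (g.sub_dvd_eval_sub _ _)).mul_left b
    simp only [mem_WqSet_iff_of_dvd_sub hdvd, eMod_eq_of_dvd_sub heval]
  simp only [sievedSum, Finset.sum_filter]
  rw [← sum_range_mul_of_coprime hcop hq₁ hq₂ (hper q₁ _) (hper q₂ _)]
  refine Finset.sum_congr rfl fun s _ => ?_
  simp only [WqSet_mul hcop, Set.mem_inter_iff, ite_zero_mul_ite_zero,
    eMod_mul_of_add_eq_one hq₁ hq₂ huv, mul_assoc]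

end SievedResidues

section SievedSumPrimePower

variable {p k j : ℕ} [hp : Fact p.Prime] {g : ℤ[X]} {Y : ℝ} {a : ℤ}

theorem gcd_cont_C_mul_prime_pow (ha : IsCoprime a p) (j : ℕ) :
    (cont (C a * g)).gcd (p ^ j) = (cont g).gcd (p ^ j) := by
  have hcop : a.natAbs.Coprime (p ^ j) :=
    Nat.Coprime.pow_right j (Int.isCoprime_iff_gcd_eq_one.1 ha)
  rcases eq_or_ne a 0 with rfl | ha0
  · exact absurd (isCoprime_zero_left.1 ha) (Nat.prime_iff_prime_int.1 hp.out).not_isUnit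
  · rw [cont_C_mul ha0, hcop.gcd_mul_left_cancel]

theorem sievedSum_prime_pow_eq_expSum (hg : g.derivative ≠ 0)
    (h : ¬((p : ℝ) ≤ Y ∧ gammaExp g p ≤ j)) :
    sievedSum g Y (p ^ j) a = expSum (p ^ j) (C a * g) := by
  have hmem (n : ℤ) : n ∈ WqSet g Y (p ^ j) :=
    (mem_WqSet_prime_pow_iff hp.out hg n).2 fun hY hγ => absurd ⟨hY, hγ⟩ h
  simp only [sievedSum, expSum, hmem, Finset.filter_true, eval_mul, eval_C]

theorem sievedSum_prime_pow_eq_sum_filter (hg : g.derivative ≠ 0) (ha : IsCoprime a p)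
    (hY : (p : ℝ) ≤ Y) (hγ : gammaExp g p ≤ j) :
    sievedSum g Y (p ^ j) a = ∑ s ∈ Finset.range (p ^ j) with
      ¬(p : ℤ) ^ gammaExp g p ∣ (C a * g).derivative.eval ((s : ℕ) : ℤ),
        eMod (p ^ j) ((C a * g).eval (s : ℤ)) := by
  have hmem (n : ℤ) : n ∈ WqSet g Y (p ^ j) ↔
      ¬(p : ℤ) ^ gammaExp g p ∣ (C a * g).derivative.eval n := by
    have hcancel : (p : ℤ) ^ gammaExp g p ∣ a * g.derivative.eval n ↔
        (p : ℤ) ^ gammaExp g p ∣ g.derivative.eval n :=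
      ⟨ha.symm.pow_left.dvd_of_dvd_mul_left, fun h => h.mul_left a⟩
    simp only [mem_WqSet_prime_pow_iff hp.out hg, hY, hγ, true_imp_iff, derivative_C_mul, eval_mul,
      eval_C, hcancel]
  simp only [sievedSum, hmem, eval_mul, eval_C]

/-- The constant attached to each prime factor of the modulus: the three terms bound the sums
modulo small powers of `p`, modulo `p` itself, and the unsieved sums. -/
def sieveConst (k : ℕ) : ℕ :=
  k.superFactorial ^ 3 + 2 * k + k ^ 4

theorem norm_sievedSum_prime_pow_le_of_le (hg : g.derivative ≠ 0) (hdeg : g.natDegree ≤ k)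
    (ha : IsCoprime a p) (hY : (p : ℝ) ≤ Y) :
    ‖sievedSum g Y (p ^ j) a‖ ≤ sieveConst k * (cont g).gcd (p ^ j) ^ 3 * √p ^ j := by
  have hpj : 0 < p ^ j := pow_pos hp.out.pos j
  rcases le_or_gt (gammaExp g p) j with hγ | hγ
  · obtain ⟨δ, hδ⟩ := Nat.exists_eq_add_of_le' (gammaExp_pos hp.out hg)
    have hdvd (n : ℤ) : (p : ℤ) ^ δ ∣ (C a * g).derivative.eval n := by
      rw [derivative_C_mul, eval_mul]
      exact (pow_dvd_eval_derivative_of_lt_gammaExp (by lia) n).mul_left _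
    rw [sievedSum_prime_pow_eq_sum_filter hg ha hY hγ, hδ, ← gcd_cont_C_mul_prime_pow ha]
    refine (norm_sum_filter_not_dvd_derivative_le ((natDegree_C_mul_le a g).trans hdeg) hdvd
      (hδ ▸ hγ)).trans ?_
    gcongr
    rw [sieveConst]
    exact_mod_cast Nat.le_add_right _ _
  · have hmod : p ^ j ≤ k.superFactorial * (cont g).gcd (p ^ j) :=
      le_superFactorial_mul_gcd hdeg
        (mod_cast pow_dvd_eval_derivative_of_lt_gammaExp hγ) hpj dvd_rfl
    have hconst : k.superFactorial ≤ sieveConst k :=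
      (Nat.le_self_pow three_ne_zero _).trans (by rw [sieveConst]; lia)
    have hsqrt : 1 ≤ √(p : ℝ) ^ j := one_le_pow₀ (Real.one_le_sqrt.2 (mod_cast hp.out.one_le))
    calc ‖sievedSum g Y (p ^ j) a‖ ≤ (p ^ j : ℕ) := norm_sievedSum_le_self _ _ _ _
      _ ≤ sieveConst k * (cont g).gcd (p ^ j) ^ 3 := mod_cast hmod.trans
        (Nat.mul_le_mul hconst (Nat.le_self_pow three_ne_zero _))
      _ ≤ _ := le_mul_of_one_le_right (by positivity) hsqrt

theorem norm_sievedSum_prime_pow_le (hk : 2 ≤ k) {P : ℝ} (hP : DominatesPowers k p P)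
    (hg : g.derivative ≠ 0) (hdeg : g.natDegree ≤ k) (ha : IsCoprime a p) :
    ‖sievedSum g Y (p ^ j) a‖ ≤ sieveConst k * (cont g).gcd (p ^ j) ^ 3 * P ^ j := by
  have hP0 : 0 ≤ P := zero_le_one.trans (hP.one_le (by lia))
  rcases le_or_gt (p : ℝ) Y with hY | hY
  · refine (norm_sievedSum_prime_pow_le_of_le hg hdeg ha hY).trans ?_
    gcongr
    exact hP.sqrt_le hk
  · rw [sievedSum_prime_pow_eq_expSum hg fun h => hY.not_ge h.1, ← gcd_cont_C_mul_prime_pow ha]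
    refine (norm_expSum_prime_pow_le hk hP ((natDegree_C_mul_le a g).trans hdeg) j).trans ?_
    have hconst : k ^ 4 ≤ sieveConst k := Nat.le_add_left _ _
    gcongr
    · exact_mod_cast hconst
    · exact_mod_cast Nat.le_self_pow three_ne_zero _

end SievedSumPrimePower

section CompositeModuli

/-- The shape `(c, q)³ K^{ω(q)} q^θ` of the bounds, which is multiplicative in `q`. -/
noncomputable def sieveBound (c K : ℕ) (θ : ℝ) (q : ℕ) : ℝ :=
  (c.gcd q : ℝ) ^ 3 * K ^ q.primeFactors.card * (q : ℝ) ^ θ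

variable {c K : ℕ} {θ : ℝ}

theorem sieveBound_prime_pow {p j : ℕ} (hp : p.Prime) (hj : j ≠ 0) :
    sieveBound c K θ (p ^ j) = K * (c.gcd (p ^ j) : ℝ) ^ 3 * ((p : ℝ) ^ θ) ^ j := by
  rw [sieveBound, Nat.primeFactors_prime_pow hj hp, Finset.card_singleton, pow_one, Nat.cast_pow,
    ← Real.rpow_pow_comm p.cast_nonneg, mul_comm (K : ℝ)]

theorem sieveBound_mul {q₁ q₂ : ℕ} (h : q₁.Coprime q₂) :
    sieveBound c K θ (q₁ * q₂) = sieveBound c K θ q₁ * sieveBound c K θ q₂ := by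
  simp only [sieveBound]
  rw [h.gcd_mul, h.primeFactors_mul, Finset.card_union_of_disjoint h.disjoint_primeFactors,
    Nat.cast_mul, Nat.cast_mul, Real.mul_rpow q₁.cast_nonneg q₂.cast_nonneg]
  ring

theorem norm_sievedSum_le_sieveBound {g : ℤ[X]} {Y : ℝ} {q : ℕ} (hq : 0 < q)
    (hprime : ∀ p j : ℕ, p.Prime → p ∣ q → j ≠ 0 → ∀ b : ℤ, IsCoprime b p →
      ‖sievedSum g Y (p ^ j) b‖ ≤ sieveBound c K θ (p ^ j))
    {a : ℤ} (ha : IsCoprime a q) : ‖sievedSum g Y q a‖ ≤ sieveBound c K θ q := by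
  induction q using Nat.recOnPosPrimePosCoprime generalizing a with
  | prime_pow p j hp hj =>
    refine hprime p j hp (dvd_pow_self p hj.ne') hj.ne' a ?_
    rw [Nat.cast_pow] at ha
    exact (IsCoprime.pow_right_iff hj).1 ha
  | zero => exact absurd hq (lt_irrefl 0)
  | one => simpa [sieveBound] using norm_sievedSum_le_self g Y 1 a
  | coprime q₁ q₂ hq₁ hq₂ hcop ih₁ ih₂ =>
    obtain ⟨u, v, huv⟩ := Nat.isCoprime_iff_coprime.2 hcop
    rw [Nat.cast_mul] at ha
    have hv : IsCoprime (v * a) q₁ :=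
      .mul_left ⟨q₂, u, by linear_combination huv⟩ ha.of_mul_right_left
    have hu : IsCoprime (u * a) q₂ :=
      .mul_left ⟨q₁, v, by linear_combination huv⟩ ha.of_mul_right_right
    rw [sievedSum_mul hcop (by lia) (by lia) huv, sieveBound_mul hcop, norm_mul]
    have h₁ := ih₁ (by lia) (fun p j hp hpq => hprime p j hp (hpq.mul_right q₂)) hv
    have h₂ := ih₂ (by lia) (fun p j hp hpq => hprime p j hp (hpq.mul_left q₁)) hu
    exact mul_le_mul h₁ h₂ (norm_nonneg _) ((norm_nonneg _).trans h₁)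

variable {k q : ℕ} {g : ℤ[X]} {Y : ℝ} {a : ℤ}

theorem norm_sievedSum_le (hk : 2 ≤ k) (hg : g.derivative ≠ 0) (hdeg : g.natDegree ≤ k)
    (hq : 0 < q) (ha : IsCoprime a q) :
    ‖sievedSum g Y q a‖ ≤ sieveBound (cont g) (sieveConst k) (1 - 1 / k) q := by
  refine norm_sievedSum_le_sieveBound hq (fun p j hp _ hj b hb => ?_) ha
  have := Fact.mk hp
  rw [sieveBound_prime_pow hp hj]
  exact norm_sievedSum_prime_pow_le hk (dominatesPowers_rpow hp.one_le) hg hdeg hb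

theorem norm_sievedSum_le_of_le (hg : g.derivative ≠ 0) (hdeg : g.natDegree ≤ k) (hq : 0 < q)
    (ha : IsCoprime a q) (hY : (q : ℝ) ≤ Y) :
    ‖sievedSum g Y q a‖ ≤ sieveBound (cont g) (sieveConst k) (1 / 2) q := by
  refine norm_sievedSum_le_sieveBound hq (fun p j hp hpq hj b hb => ?_) ha
  have := Fact.mk hp
  have hpY : (p : ℝ) ≤ Y := (Nat.cast_le.2 (Nat.le_of_dvd hq hpq)).trans hY
  rw [sieveBound_prime_pow hp hj, ← Real.sqrt_eq_rpow]
  exact norm_sievedSum_prime_pow_le_of_le hg hdeg hb hpY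

end CompositeModuli

open scoped Classical in
/-- On the left the bound variable `s` is an integer, so the finset is elaborated as the monadic
image of `Finset.range q` in `ℤ`. -/
theorem sum_e_eq_sievedSum (g : ℤ[X]) (Y : ℝ) (q a : ℕ) :
    ∑ s ∈ (Finset.range q).filter (fun s => (s : ℤ) ∈ WqSet g Y q),
      e ((a : ℝ) * ((g.eval (s : ℤ) : ℤ) : ℝ) / q) = sievedSum g Y q a := by
  have himage : (do let s ← Finset.range q; pure (s : ℤ) : Finset ℤ) =
      (Finset.range q).image (Nat.cast : ℕ → ℤ) := by
    ext x
    simp [Finset.bind_def, Finset.pure_def, eq_comm]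
  rw [himage, Finset.sum_filter, Finset.sum_image Nat.cast_injective.injOn, sievedSum,
    Finset.sum_filter]
  simp only [eMod, Int.cast_mul, Int.cast_natCast]

open scoped Classical in
/-- Lemma 4.3 (Rice): complete exponential sum bounds over sieved residues:
`|∑_{0 ≤ s < q, s ∈ W_q(g;Y)} e(a·g(s)/q)| ≪_k gcd(cont(g),q)³·C^{ω(q)}·q^{1-1/k}`,
with the stronger exponent `1/2` when `q ≤ Y`. -/
theorem stmt10 (k : ℕ) (hk : 2 ≤ k) :
    ∃ C₁ C₂ : ℝ, 0 < C₁ ∧ 0 < C₂ ∧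
      ∀ g : Polynomial ℤ, g.natDegree = k →
        ∀ a q : ℕ, 0 < a → 0 < q → Nat.gcd a q = 1 → ∀ Y : ℝ, 0 < Y →
          (‖∑ s ∈ (Finset.range q).filter (fun s => (s : ℤ) ∈ WqSet g Y q),
              e ((a : ℝ) * ((g.eval (s : ℤ) : ℤ) : ℝ) / q)‖ ≤
            C₁ * (Nat.gcd (cont g) q : ℝ) ^ 3 * C₂ ^ q.primeFactors.card *
              (q : ℝ) ^ ((1 : ℝ) - 1 / k)) ∧
          ((q : ℝ) ≤ Y →
            ‖∑ s ∈ (Finset.range q).filter (fun s => (s : ℤ) ∈ WqSet g Y q),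
                e ((a : ℝ) * ((g.eval (s : ℤ) : ℤ) : ℝ) / q)‖ ≤
              C₁ * (Nat.gcd (cont g) q : ℝ) ^ 3 * C₂ ^ q.primeFactors.card *
                (q : ℝ) ^ ((1 : ℝ) / 2)) := by
  refine ⟨1, sieveConst k, one_pos, ?_, ?_⟩
  · have : 0 < sieveConst k := by rw [sieveConst]; positivity
    exact_mod_cast this
  intro g hdeg a q _ hq haq Y _
  have hg : g.derivative ≠ 0 := by
    rw [Ne, Polynomial.derivative_eq_zero, hdeg]
    lia
  have ha : IsCoprime (a : ℤ) q := Nat.isCoprime_iff_coprime.2 haq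
  rw [sum_e_eq_sievedSum, one_mul]
  exact ⟨norm_sievedSum_le hk hg hdeg.le hq ha, norm_sievedSum_le_of_le hg hdeg.le hq ha⟩
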